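/- arXiv:1308.3284 — 2 statements merged into one kernel-verified Lean document; each statement's English description precedes it below -/
import Mathlib

section
/- Let 1 ≤ k ≤ n and let f₁,…,f_k ∈ ℂ[t] be ℂ-linearly independent polynomials, each of degree at most n−1. If every complex root of the Wronskian Wr(f₁,…,f_k) is real, then the ℂ-linear span of f₁,…,f_k has a basis consisting of polynomials with real coefficients (equivalently, the span is stable under coefficientwise complex conjugation). [Theorem of Mukhin–Tarasov–Varchenko; the Shapiro Conjecture in its Wronskian formulation.] -/
/-- The Wronskian of polynomials `f 0, …, f (k-1)`: the determinant of the `k × k`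
matrix whose `(i, j)` entry is the `i`-th derivative of `f j`. -/
noncomputable def Wr {k : ℕ} (f : Fin k → Polynomial ℂ) : Polynomial ℂ :=
  Matrix.det (Matrix.of fun i j : Fin k => Polynomial.derivative^[(i : ℕ)] (f j))

open Equiv Finset
open scoped Matrix

/-- Right translation by `g` on functions on the symmetric group, as a matrix. -/
def rightTranslation {n : ℕ} (S : Type*) [Semiring S] :
    Perm (Fin n) →* Matrix (Perm (Fin n)) (Perm (Fin n)) S where
  toFun g := Matrix.of fun σ τ => if τ = σ * g then 1 else 0
  map_one' := by
    ext σ τ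
    simp [Matrix.one_apply, eq_comm]
  map_mul' g h := by
    ext σ τ
    simp only [Matrix.of_apply, Matrix.mul_apply, mul_ite, mul_one, mul_zero, ← mul_assoc]
    rw [Finset.sum_eq_single (σ * g)]
    · simp
    · intro b _ hb
      simp [hb]
    · simp

/-- The diagonal matrix with entry `y (σ i)` at the permutation `σ`. -/
def diagonalTwist {n : ℕ} {S : Type*} [Semiring S] (y : Fin n → S) (i : Fin n) :
    Matrix (Perm (Fin n)) (Perm (Fin n)) S :=
  Matrix.diagonal fun σ => y (σ i)

/-- The Gaudin Hamiltonians with weights `w` and twist `y`. -/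
def gaudin {n : ℕ} {S : Type*} [CommRing S] (w : Fin n → Fin n → S) (y : Fin n → S) (i : Fin n) :
    Matrix (Perm (Fin n)) (Perm (Fin n)) S :=
  diagonalTwist y i - ∑ j, w i j • rightTranslation S (swap i j)

theorem rightTranslation_mul_diagonalTwist {n : ℕ} {S : Type*} [CommRing S] (y : Fin n → S)
    (g : Perm (Fin n)) (i : Fin n) :
    rightTranslation S g * diagonalTwist y i = diagonalTwist y (g i) * rightTranslation S g := by
  ext σ τ
  simp only [rightTranslation, diagonalTwist, MonoidHom.coe_mk, OneHom.coe_mk,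
    Matrix.mul_diagonal, Matrix.diagonal_mul, Matrix.of_apply]
  split_ifs with h <;> simp [h]

/-- The classical Yang–Baxter commutation of the untwisted Gaudin Hamiltonians. -/
theorem commute_sum_swap {n : ℕ} {S A : Type*} [CommRing S] [Ring A] [Algebra S A]
    (ρ : Perm (Fin n) →* A) (w : Fin n → Fin n → S) (hdiag : ∀ i, w i i = 0)
    (hyb : ∀ i k m, i ≠ k → i ≠ m → k ≠ m → w i m * w k m - w i k * w k m - w i m * w k i = 0)
    {i k : Fin n} (hik : i ≠ k) :
    Commute (∑ j, w i j • ρ (swap i j)) (∑ l, w k l • ρ (swap k l)) := by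
  classical
  set f : Fin n → Fin n → A := fun j l =>
    (w i j * w k l) • (ρ (swap i j * swap k l) - ρ (swap k l * swap i j)) with hf
  have hsum : ∑ j, ∑ l, f j l = 0 := by
    have h0 : ∀ j l, j ≠ k → l ≠ i → l ≠ j → f j l = 0 := by
      intro j l hj hl hlj
      have : swap i j * swap k l = swap k l * swap i j := by
        rcases eq_or_ne i j with rfl | hij
        · rw [swap_self]; rfl
        rcases eq_or_ne k l with rfl | hkl
        · rw [swap_self]; rfl
        rw [mul_swap_eq_swap_mul, swap_apply_of_ne_of_ne hik.symm hj.symm,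
          swap_apply_of_ne_of_ne hl hlj]
      simp only [hf, this, sub_self, smul_zero]
    have hki : f k i = 0 := by simp only [hf, swap_comm k i, sub_self, smul_zero]
    have hrow : ∀ j, j ≠ k → j ≠ i → ∑ l, f j l = f j i + f j j := by
      intro j hj hji
      rw [← Finset.sum_subset (Finset.subset_univ {i, j}), Finset.sum_pair (Ne.symm hji)]
      intro l _ hl
      simp only [mem_insert, mem_singleton, not_or] at hl
      exact h0 j l hj hl.1 hl.2
    have hi : ∑ l, f i l = 0 := Finset.sum_eq_zero fun l _ => by simp [hf, hdiag]
    have hm : ∀ m, m ≠ i → m ≠ k → f k m + (f m i + f m m) = 0 := by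
      intro m hmi hmk
      have e1 : swap i m * swap k m = swap i k * swap i m := by
        rw [mul_swap_eq_swap_mul, swap_apply_right, swap_apply_of_ne_of_ne hik.symm hmk.symm,
          swap_comm k i]
      have e2 : swap k m * swap i k = swap i m * swap k m := by
        rw [mul_swap_eq_swap_mul, swap_apply_left, swap_apply_of_ne_of_ne hik hmi.symm]
      have e3 : swap k m * swap i m = swap i k * swap k m := by
        rw [mul_swap_eq_swap_mul, swap_apply_right, swap_apply_of_ne_of_ne hik hmi.symm]
      have e4 : swap i m * swap i k = swap k m * swap i m := by
        rw [mul_swap_eq_swap_mul, swap_apply_left, swap_apply_of_ne_of_ne hik.symm hmk.symm,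
          swap_comm m k]
      have h1 : f k m = (-(w i k * w k m)) •
          (ρ (swap i m * swap k m) - ρ (swap k m * swap i m)) := by
        simp only [hf]
        rw [← e3, e2, neg_smul, ← smul_neg, neg_sub]
      have h2 : f m i = (-(w i m * w k i)) •
          (ρ (swap i m * swap k m) - ρ (swap k m * swap i m)) := by
        simp only [hf]
        rw [swap_comm k i, e4, ← e1, neg_smul, ← smul_neg, neg_sub]
      rw [h1, h2, ← add_smul, ← add_smul]
      convert zero_smul S _ using 2
      linear_combination hyb i k m hik hmi.symm hmk.symm
    rw [← Finset.add_sum_erase _ _ (mem_univ k), ← Finset.add_sum_erase _ _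
      (show i ∈ univ.erase k by simp [hik]), hi, zero_add]
    rw [← Finset.add_sum_erase _ _ (mem_univ k), ← Finset.add_sum_erase _ _
      (show i ∈ univ.erase k by simp [hik]), hki]
    rw [show f k k = 0 by simp [hf, hdiag], zero_add, zero_add, ← Finset.sum_add_distrib]
    refine Finset.sum_eq_zero fun m hmem => ?_
    simp only [mem_erase, mem_univ, and_true] at hmem
    rw [hrow m hmem.2 hmem.1]
    exact hm m hmem.1 hmem.2
  rw [commute_iff_eq, ← sub_eq_zero, ← hsum, Finset.sum_mul_sum, Finset.sum_mul_sum,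
    Finset.sum_comm (f := fun l j => (w k l • ρ (swap k l)) * (w i j • ρ (swap i j))),
    ← Finset.sum_sub_distrib]
  refine Finset.sum_congr rfl fun j _ => ?_
  rw [← Finset.sum_sub_distrib]
  refine Finset.sum_congr rfl fun l _ => ?_
  simp [hf, smul_sub, smul_smul, mul_comm (w k l)]

theorem commute_gaudin {n : ℕ} {S : Type*} [CommRing S] (w : Fin n → Fin n → S) (y : Fin n → S)
    (hdiag : ∀ i, w i i = 0) (hanti : ∀ i j, w j i = -w i j)
    (hyb : ∀ i k m, i ≠ k → i ≠ m → k ≠ m → w i m * w k m - w i k * w k m - w i m * w k i = 0)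
    (i k : Fin n) : Commute (gaudin w y i) (gaudin w y k) := by
  rcases eq_or_ne i k with rfl | hik
  · exact Commute.refl _
  have hcross : ∀ i k : Fin n, i ≠ k →
      diagonalTwist y i * (∑ l, w k l • rightTranslation S (swap k l)) -
        (∑ l, w k l • rightTranslation S (swap k l)) * diagonalTwist y i =
      w k i • ((diagonalTwist y i - diagonalTwist y k) * rightTranslation S (swap k i)) := by
    intro i k hik
    rw [Finset.mul_sum, Finset.sum_mul, ← Finset.sum_sub_distrib, Finset.sum_eq_single i]
    · rw [smul_mul_assoc, rightTranslation_mul_diagonalTwist, mul_smul_comm, ← smul_sub, ← sub_mul,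
        swap_apply_right]
    · intro l _ hl
      rw [smul_mul_assoc, rightTranslation_mul_diagonalTwist, mul_smul_comm,
        swap_apply_of_ne_of_ne hik hl.symm, sub_self]
    · simp
  have hdd : diagonalTwist y i * diagonalTwist y k = diagonalTwist y k * diagonalTwist y i := by
    simp [diagonalTwist, mul_comm]
  have hss := (commute_sum_swap (rightTranslation S) w hdiag hyb hik).eq
  have h1 := hcross i k hik
  have h2 := hcross k i hik.symm
  rw [swap_comm i k, hanti k i] at h2
  rw [commute_iff_eq, gaudin, gaudin, ← sub_eq_zero]
  set a := diagonalTwist y i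
  set b := diagonalTwist y k
  set c := ∑ j, w i j • rightTranslation S (swap i j)
  set d := ∑ j, w k j • rightTranslation S (swap k j)
  have h3 : (a * d - d * a) - (b * c - c * b) = 0 := by
    rw [h1, h2, neg_smul, ← smul_neg, ← neg_mul, neg_sub, sub_self]
  calc (a - c) * (b - d) - (b - d) * (a - c)
      = (a * b - b * a) - ((a * d - d * a) - (b * c - c * b)) + (c * d - d * c) := by noncomm_ring
    _ = 0 := by rw [h3, hdd, hss]; simp

/-- The Calogero–Moser Lax matrix with momenta `p` and off-diagonal entries `w`. -/
def laxMatrix {n : ℕ} {S : Type*} [Ring S] (w : Fin n → Fin n → S) (p : Fin n → S) :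
    Matrix (Fin n) (Fin n) S :=
  Matrix.diagonal p + Matrix.of w

/-- The indicator row vector of the permutations sending `j` to `a`. -/
def placeIndicator {n : ℕ} (S : Type*) [CommRing S] (a j : Fin n) : Perm (Fin n) → S :=
  fun σ => if σ j = a then 1 else 0

theorem placeIndicator_vecMul_gaudin {n : ℕ} {S : Type*} [CommRing S] (w : Fin n → Fin n → S)
    (y : Fin n → S) (a i : Fin n) :
    placeIndicator S a i ᵥ* gaudin w y i =
      y a • placeIndicator S a i - ∑ j, w i j • placeIndicator S a j := by
  have hT : ∀ j, placeIndicator S a i ᵥ* rightTranslation S (swap i j) = placeIndicator S a j := by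
    intro j
    ext τ
    simp only [Matrix.vecMul, dotProduct, placeIndicator, rightTranslation, MonoidHom.coe_mk,
      OneHom.coe_mk, Matrix.of_apply]
    rw [Finset.sum_eq_single (τ * swap i j)]
    · simp [mul_assoc]
    · intro b _ hb
      have hne : τ ≠ b * swap i j := fun h => hb (by rw [h, mul_assoc, swap_mul_self, mul_one])
      rw [if_neg hne, mul_zero]
    · simp
  have hsum : placeIndicator S a i ᵥ* (∑ j, w i j • rightTranslation S (swap i j)) =
      ∑ j, w i j • placeIndicator S a j := by
    rw [Matrix.vecMul_sum]
    exact Finset.sum_congr rfl fun j _ => by rw [Matrix.vecMul_smul, hT]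
  rw [gaudin, Matrix.vecMul_sub, hsum]
  congr 1
  ext τ
  rw [diagonalTwist, Matrix.vecMul_diagonal]
  simp only [placeIndicator, Pi.smul_apply, smul_eq_mul]
  split_ifs with h <;> simp [h]

theorem map_prod_eq_diagonal {m α K B : Type*} [Fintype m] [DecidableEq m] [CommRing K]
    [CommRing B] (F : B →+* Matrix m m K) (s : Finset α) (u : α → B) (v : m → α → K)
    (h : ∀ i ∈ s, F (u i) = Matrix.diagonal fun x => v x i) :
    F (∏ i ∈ s, u i) = Matrix.diagonal fun x => ∏ i ∈ s, v x i := by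
  classical
  induction s using Finset.induction_on with
  | empty => simp
  | insert a s ha ih =>
    rw [Finset.prod_insert ha, map_mul, h a (by simp), ih fun i hi => h i (by simp [hi]),
      Matrix.diagonal_mul_diagonal]
    simp [Finset.prod_insert ha]

/-- In a commutative algebra generated by the Gaudin Hamiltonians, each twist parameter is an
eigenvalue of the Lax matrix whose momenta are the Hamiltonians, provided that the Hamiltonians
degenerate to their (generic) diagonal parts under some specialization `e`. -/
theorem eval_charpoly_laxMatrix_gaudin {n : ℕ} {S K B : Type*} [CommRing S] [IsDomain S]
    [CommRing K] [IsDomain K] [CommRing B] [Algebra S B]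
    (w : Fin n → Fin n → S) (y : Fin n → S) (e : S →+* K) (hw : ∀ i j, e (w i j) = 0)
    (hy : Function.Injective fun a => e (y a))
    (ι : B →ₐ[S] Matrix (Perm (Fin n)) (Perm (Fin n)) S) (hι : Function.Injective ι)
    (H : Fin n → B) (hH : ∀ i, ι (H i) = gaudin w y i) (a : Fin n) :
    (laxMatrix (fun i j => algebraMap S B (w i j)) H).charpoly.eval (algebraMap S B (y a)) = 0 := by
  classical
  rw [Matrix.eval_charpoly]
  set N := Matrix.scalar (Fin n) (algebraMap S B (y a)) -
    laxMatrix (fun i j => algebraMap S B (w i j)) H with hN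
  have hrow : ∀ i, ∑ j, placeIndicator S a j ᵥ* ι (N i j) = 0 := by
    intro i
    have hdiag : ∀ j, placeIndicator S a j ᵥ* ι (N i j) =
        (if i = j then y a • placeIndicator S a j - placeIndicator S a j ᵥ* ι (H i) else 0) -
          w i j • placeIndicator S a j := by
      intro j
      by_cases hij : i = j
      · subst hij
        simp only [hN, laxMatrix, Matrix.sub_apply, Matrix.add_apply, Matrix.scalar_apply,
          Matrix.diagonal_apply_eq, Matrix.of_apply, map_sub, map_add, if_true,
          Matrix.vecMul_sub, Matrix.vecMul_add, Algebra.algebraMap_eq_smul_one,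
          map_smul, map_one, Matrix.vecMul_smul, Matrix.vecMul_one]
        abel
      · simp [hN, laxMatrix, hij, Matrix.vecMul_neg, Algebra.algebraMap_eq_smul_one,
          Matrix.vecMul_smul]
    simp_rw [hdiag]
    rw [Finset.sum_sub_distrib, Finset.sum_ite_eq, if_pos (mem_univ i), hH,
      placeIndicator_vecMul_gaudin]
    abel
  have hdet : ∀ k, placeIndicator S a k ᵥ* ι N.det = 0 := by
    intro k
    have h1 : ∑ i, (∑ j, placeIndicator S a j ᵥ* ι (N i j)) ᵥ* ι (N.adjugate k i) = 0 := by
      simp [hrow]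
    have h2 : ∀ i, (∑ j, placeIndicator S a j ᵥ* ι (N i j)) ᵥ* ι (N.adjugate k i) =
        ∑ j, placeIndicator S a j ᵥ* ι (N.adjugate k i * N i j) := by
      intro i
      rw [Matrix.sum_vecMul]
      refine Finset.sum_congr rfl fun j _ => ?_
      rw [Matrix.vecMul_vecMul, ← map_mul, mul_comm]
    simp_rw [h2] at h1
    rw [Finset.sum_comm] at h1
    simp_rw [← Matrix.vecMul_sum, ← map_sum, ← Matrix.mul_apply, Matrix.adjugate_mul] at h1
    rw [Finset.sum_eq_single k] at h1
    · simpa using h1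
    · intro j _ hj
      simp [Matrix.one_apply_ne hj.symm]
    · simp
  let f : Perm (Fin n) → B := fun σ =>
    ∏ i, ∏ b ∈ univ.erase (σ i), (H i - algebraMap S B (y b))
  let E : Matrix (Perm (Fin n)) (Perm (Fin n)) S :=
    Matrix.of fun σ => placeIndicator S a (σ⁻¹ a) ᵥ* ι (f σ)
  have hEM : E * ι N.det = 0 := by
    ext σ τ
    have hrowE : (E * ι N.det) σ =
        (placeIndicator S a (σ⁻¹ a) ᵥ* ι (f σ)) ᵥ* ι N.det := rfl
    rw [hrowE, Matrix.vecMul_vecMul, ← map_mul, mul_comm, map_mul, ← Matrix.vecMul_vecMul, hdet]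
    simp
  have hspec : ∀ i b, e.mapMatrix (ι (H i - algebraMap S B (y b))) =
      Matrix.diagonal fun τ : Perm (Fin n) => e (y (τ i)) - e (y b) := by
    intro i b
    rw [map_sub, AlgHom.commutes, hH, gaudin]
    ext σ τ
    by_cases hστ : σ = τ
    · subst hστ
      simp [diagonalTwist, Matrix.sum_apply, hw, Matrix.algebraMap_matrix_apply]
    · simp [diagonalTwist, Matrix.sum_apply, hw, Matrix.algebraMap_matrix_apply, hστ]
  have hspecf : ∀ σ, e.mapMatrix (ι (f σ)) =
      Matrix.diagonal fun τ : Perm (Fin n) =>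
        ∏ i, ∏ b ∈ univ.erase (σ i), (e (y (τ i)) - e (y b)) := by
    intro σ
    let F : B →+* Matrix (Perm (Fin n)) (Perm (Fin n)) K := e.mapMatrix.comp ι.toRingHom
    exact map_prod_eq_diagonal F _ _ _ fun i _ =>
      map_prod_eq_diagonal F _ _ _ fun b _ => hspec i b
  have hE : E.map e = Matrix.diagonal fun σ : Perm (Fin n) =>
      ∏ i, ∏ b ∈ univ.erase (σ i), (e (y (σ i)) - e (y b)) := by
    ext σ τ
    have hentry : E σ τ = (placeIndicator S a (σ⁻¹ a) ᵥ* ι (f σ)) τ := rfl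
    have hmap : ∀ ρ, e (ι (f σ) ρ τ) = e.mapMatrix (ι (f σ)) ρ τ := fun ρ => rfl
    rw [Matrix.map_apply, hentry]
    simp only [Matrix.vecMul, dotProduct, map_sum, map_mul, hmap, hspecf]
    rw [Finset.sum_eq_single τ (fun b _ hb => by rw [Matrix.diagonal_apply_ne _ hb, mul_zero])
      (by simp), Matrix.diagonal_apply_eq]
    by_cases hστ : σ = τ
    · subst hστ
      simp [placeIndicator]
    · obtain ⟨i, hi⟩ : ∃ i, σ i ≠ τ i := by
        by_contra! h
        exact hστ (Equiv.ext h)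
      rw [Matrix.diagonal_apply_ne _ hστ, Finset.prod_eq_zero (mem_univ i), mul_zero]
      exact Finset.prod_eq_zero (i := τ i) (by simp [hi.symm]) (sub_self _)
  have hdetE : E.det ≠ 0 := by
    intro h
    have h0 : (E.map e).det = 0 := by
      rw [← RingHom.mapMatrix_apply, ← RingHom.map_det, h, map_zero]
    rw [hE, Matrix.det_diagonal, Finset.prod_eq_zero_iff] at h0
    obtain ⟨σ, -, h0⟩ := h0
    rw [Finset.prod_eq_zero_iff] at h0
    obtain ⟨i, -, h0⟩ := h0
    rw [Finset.prod_eq_zero_iff] at h0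
    obtain ⟨b, hb, h0⟩ := h0
    exact (Finset.ne_of_mem_erase hb) (hy (sub_eq_zero.mp h0)).symm
  apply hι
  rw [map_zero]
  have h0 : E.det • ι N.det = 0 := by
    have := congrArg (fun M => E.adjugate * M) hEM
    simpa [← mul_assoc, Matrix.adjugate_mul] using this
  ext σ τ
  have := congrFun (congrFun h0 σ) τ
  simpa [hdetE] using this

theorem charpoly_isRoot_of_algHom_injective {m R B K : Type*} [Fintype m] [DecidableEq m]
    [CommRing R] [CommRing B] [Algebra R B] [CommRing K] (ι : B →ₐ[R] Matrix m m R)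
    (hι : Function.Injective ι) (φ : B →+* K) (b : B) :
    ((φ.comp (algebraMap R B)).mapMatrix (ι b)).charpoly.IsRoot (φ b) := by
  have h0 : Polynomial.aeval b (ι b).charpoly = 0 := by
    apply hι
    rw [← Polynomial.aeval_algHom_apply, Matrix.aeval_self_charpoly, map_zero]
  have h1 := congrArg φ h0
  rw [map_zero, Polynomial.aeval_def, Polynomial.hom_eval₂] at h1
  rw [RingHom.mapMatrix_apply, Matrix.charpoly_map, Polynomial.IsRoot, Polynomial.eval_map, h1]

/-- Lying over: a surjection onto an algebraically closed field extends along an injective integral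
ring homomorphism. -/
theorem exists_ringHom_comp_eq_of_isIntegral {P B K : Type*} [CommRing P] [CommRing B] [Field K]
    [IsAlgClosed K] (θ : P →+* B) (hinj : Function.Injective θ) (hθint : θ.IsIntegral)
    (ev : P →+* K) (hev : Function.Surjective ev) : ∃ φ : B →+* K, φ.comp θ = ev := by
  let := θ.toAlgebra
  have : Algebra.IsIntegral P B := ⟨hθint⟩
  have hmax : (RingHom.ker ev).IsMaximal := RingHom.ker_isMaximal_of_surjective ev hev
  obtain ⟨Q, hQ, hQc⟩ := Ideal.exists_ideal_over_maximal_of_isIntegral (S := B) (RingHom.ker ev)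
    (by
      have : RingHom.ker (algebraMap P B) = ⊥ := (RingHom.injective_iff_ker_eq_bot _).mp hinj
      rw [this]; exact bot_le)
  let : Field (B ⧸ Q) := Ideal.Quotient.field Q
  let F : P ⧸ RingHom.ker ev →+* B ⧸ Q := Ideal.quotientMap Q (algebraMap P B) hQc.ge
  let : Field (P ⧸ RingHom.ker ev) := Ideal.Quotient.field _
  let : Algebra (P ⧸ RingHom.ker ev) (B ⧸ Q) := F.toAlgebra
  let : Algebra (P ⧸ RingHom.ker ev) K := (RingHom.kerLift ev).toAlgebra
  have : Algebra.IsIntegral (P ⧸ RingHom.ker ev) (B ⧸ Q) := by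
    refine ⟨fun x => ?_⟩
    obtain ⟨b, rfl⟩ := Ideal.Quotient.mk_surjective x
    obtain ⟨f, hf, hfb⟩ := hθint b
    refine ⟨f.map (Ideal.Quotient.mk _), hf.map _, ?_⟩
    have h1 := congrArg (Ideal.Quotient.mk Q) hfb
    rw [map_zero, Polynomial.hom_eval₂] at h1
    rw [Polynomial.eval₂_map]
    exact h1
  let ψ : B ⧸ Q →ₐ[P ⧸ RingHom.ker ev] K := IsAlgClosed.lift
  refine ⟨ψ.toRingHom.comp (Ideal.Quotient.mk Q), ?_⟩
  ext x
  have h2 : Ideal.Quotient.mk Q (θ x) =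
    algebraMap (P ⧸ RingHom.ker ev) (B ⧸ Q) (Ideal.Quotient.mk _ x) := rfl
  change ψ (Ideal.Quotient.mk Q (θ x)) = ev x
  rw [h2, AlgHom.commutes]
  rfl

/-- The base ring of the deformation: polynomials in a coupling constant over polynomials in
the twist parameters. -/
abbrev TwistRing (n : ℕ) : Type := Polynomial (MvPolynomial (Fin n) ℂ)

/-- The scaled weights over `TwistRing`. -/
noncomputable def scaledWeight {n : ℕ} (w : Fin n → Fin n → ℂ) (i j : Fin n) : TwistRing n :=
  Polynomial.X * Polynomial.C (MvPolynomial.C (w i j))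

/-- The generic twist parameters. -/
noncomputable def genericTwist {n : ℕ} (i : Fin n) : TwistRing n :=
  Polynomial.C (MvPolynomial.X i)

/-- The homomorphism from `TwistRing` sending the twist parameters to `H` and the coupling
constant to `h`. -/
noncomputable def twistHom {n : ℕ} {B : Type*} [CommRing B] [Algebra ℂ B] (h : B)
    (H : Fin n → B) : TwistRing n →+* B :=
  Polynomial.eval₂RingHom (MvPolynomial.aeval H).toRingHom h

theorem twistHom_X {n : ℕ} {B : Type*} [CommRing B] [Algebra ℂ B] (h : B) (H : Fin n → B) :
    twistHom h H Polynomial.X = h := by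
  simp [twistHom]

theorem twistHom_genericTwist {n : ℕ} {B : Type*} [CommRing B] [Algebra ℂ B] (h : B)
    (H : Fin n → B) (i : Fin n) : twistHom h H (genericTwist i) = H i := by
  simp [twistHom, genericTwist]

theorem twistHom_C {n : ℕ} {B : Type*} [CommRing B] [Algebra ℂ B] (h : B)
    (H : Fin n → B) (c : ℂ) :
    twistHom h H (Polynomial.C (MvPolynomial.C c)) = algebraMap ℂ B c := by
  simp [twistHom]

theorem twistHom_scaledWeight {n : ℕ} {B : Type*} [CommRing B] [Algebra ℂ B] (h : B)
    (H : Fin n → B) (w : Fin n → Fin n → ℂ) (i j : Fin n) :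
    twistHom h H (scaledWeight w i j) = h * algebraMap ℂ B (w i j) := by
  rw [scaledWeight, map_mul, twistHom_X, twistHom_C]

theorem twistRing_hom_ext {n : ℕ} {A : Type*} [Semiring A] (f g : TwistRing n →+* A)
    (hC : ∀ c, f (Polynomial.C (MvPolynomial.C c)) = g (Polynomial.C (MvPolynomial.C c)))
    (hT : ∀ i, f (genericTwist i) = g (genericTwist i)) (hX : f Polynomial.X = g Polynomial.X) :
    f = g := by
  apply Polynomial.ringHom_ext'
  · exact MvPolynomial.ringHom_ext hC hT
  · exact hX

theorem laxMatrix_map {n : ℕ} {A A' : Type*} [Ring A] [Ring A'] (f : A →+* A')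
    (w : Fin n → Fin n → A) (p : Fin n → A) :
    (laxMatrix w p).map f = laxMatrix (fun i j => f (w i j)) fun i => f (p i) := by
  ext i j
  by_cases hij : i = j
  · subst hij
    simp [laxMatrix]
  · simp [laxMatrix, hij]

theorem map_laxMatrix_pow_mulVec {n : ℕ} {A A' : Type*} [Ring A] [Ring A'] (f : A →+* A')
    (w : Fin n → Fin n → A) (p : Fin n → A) (m : ℕ) (j : Fin n) :
    f ((laxMatrix w p ^ m *ᵥ 1) j) =
      ((laxMatrix (fun i j => f (w i j)) fun i => f (p i)) ^ m *ᵥ 1) j := by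
  rw [RingHom.map_mulVec, ← laxMatrix_map, ← RingHom.mapMatrix_apply, map_pow]
  congr 1
  ext i
  simp

section Bethe

variable {n : ℕ} {B : Type*} [CommRing B] [Algebra (TwistRing n) B] [Algebra ℂ B]
  [IsScalarTower ℂ (TwistRing n) B] (w : Fin n → Fin n → ℂ)
  (ι : B →ₐ[TwistRing n] Matrix (Perm (Fin n)) (Perm (Fin n)) (TwistRing n))
  (H : Fin n → B)

theorem algebraMap_C_C (c : ℂ) :
    algebraMap (TwistRing n) B (Polynomial.C (MvPolynomial.C c)) = algebraMap ℂ B c := by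
  rw [IsScalarTower.algebraMap_apply ℂ (TwistRing n) B]
  rfl

theorem algebraMap_scaledWeight (i j : Fin n) :
    algebraMap (TwistRing n) B (scaledWeight w i j) =
      twistHom (algebraMap (TwistRing n) B Polynomial.X) H (scaledWeight w i j) := by
  rw [twistHom_scaledWeight, scaledWeight, map_mul, algebraMap_C_C]

theorem eval_charpoly_laxMatrix_twistHom (hι : Function.Injective ι)
    (hH : ∀ i, ι (H i) = gaudin (scaledWeight w) genericTwist i) (a : Fin n) :
    (laxMatrix (scaledWeight w) genericTwist).charpoly.eval₂
      (twistHom (algebraMap (TwistRing n) B Polynomial.X) H)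
      (algebraMap (TwistRing n) B (genericTwist a)) = 0 := by
  rw [← Polynomial.eval_map, ← Matrix.charpoly_map, laxMatrix_map]
  simp_rw [twistHom_genericTwist, ← algebraMap_scaledWeight w H]
  refine eval_charpoly_laxMatrix_gaudin (scaledWeight w) genericTwist
    (Polynomial.evalRingHom (0 : MvPolynomial (Fin n) ℂ)) (fun i j => ?_) (fun i j hij => ?_)
    ι hι H hH a
  · simp [scaledWeight]
  · simpa [genericTwist] using hij

theorem isIntegral_twistHom (hι : Function.Injective ι)
    (hH : ∀ i, ι (H i) = gaudin (scaledWeight w) genericTwist i)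
    (hgen : Algebra.adjoin (TwistRing n) (Set.range H) = ⊤) :
    (twistHom (algebraMap (TwistRing n) B Polynomial.X) H).IsIntegral := by
  set θ := twistHom (algebraMap (TwistRing n) B Polynomial.X) H with hθ
  have hbase : ∀ r, θ.IsIntegralElem (algebraMap (TwistRing n) B r) := by
    intro r
    induction r using Polynomial.induction_on' with
    | add p q hp hq => rw [map_add]; exact hp.add θ hq
    | monomial k a =>
      rw [← Polynomial.C_mul_X_pow_eq_monomial, map_mul, map_pow]
      refine RingHom.IsIntegralElem.mul θ ?_ ?_
      · induction a using MvPolynomial.induction_on with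
        | C c =>
          rw [algebraMap_C_C, ← twistHom_C (algebraMap (TwistRing n) B Polynomial.X) H]
          exact θ.isIntegralElem_map
        | add p q hp hq => rw [map_add, map_add]; exact hp.add θ hq
        | mul_X p i hp =>
          rw [map_mul, map_mul]
          exact hp.mul θ ⟨_, Matrix.charpoly_monic _,
            eval_charpoly_laxMatrix_twistHom w ι H hι hH i⟩
      · rw [← twistHom_X (algebraMap (TwistRing n) B Polynomial.X) H, ← map_pow]
        exact θ.isIntegralElem_map
  intro b
  have hb : b ∈ Algebra.adjoin (TwistRing n) (Set.range H) := hgen ▸ Algebra.mem_top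
  induction hb using Algebra.adjoin_induction with
  | mem x hx =>
    obtain ⟨i, rfl⟩ := hx
    rw [← twistHom_genericTwist (algebraMap (TwistRing n) B Polynomial.X) H i]
    exact θ.isIntegralElem_map
  | algebraMap r => exact hbase r
  | add x y _ _ hx hy => exact hx.add θ hy
  | mul x y _ _ hx hy => exact hx.mul θ hy

theorem injective_twistHom (hι : Function.Injective ι)
    (hH : ∀ i, ι (H i) = gaudin (scaledWeight w) genericTwist i) :
    Function.Injective (twistHom (algebraMap (TwistRing n) B Polynomial.X) H) := by
  set θ := twistHom (algebraMap (TwistRing n) B Polynomial.X) H with hθ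
  let e : TwistRing n →+* MvPolynomial (Fin n) ℂ := Polynomial.evalRingHom 0
  have hD : (e.mapMatrix.comp ι.toRingHom).comp θ =
      (Matrix.diagonalRingHom (Perm (Fin n)) (MvPolynomial (Fin n) ℂ)).comp
        (RingHom.pi fun σ => (MvPolynomial.rename σ).toRingHom.comp e) := by
    apply twistRing_hom_ext
    · intro c
      have h1 : θ (Polynomial.C (MvPolynomial.C c)) =
          algebraMap (TwistRing n) B (Polynomial.C (MvPolynomial.C c)) := by
        rw [hθ, twistHom_C, algebraMap_C_C]
      simp only [RingHom.comp_apply, h1, AlgHom.toRingHom_eq_coe, RingHom.coe_coe,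
        AlgHom.commutes]
      ext σ τ : 1
      by_cases hστ : σ = τ
      · subst hστ
        simp [Matrix.algebraMap_matrix_apply, e]
      · simp [Matrix.algebraMap_matrix_apply, e, hστ]
    · intro i
      simp only [RingHom.comp_apply, hθ, twistHom_genericTwist, AlgHom.toRingHom_eq_coe,
        RingHom.coe_coe, hH]
      ext σ τ : 1
      by_cases hστ : σ = τ
      · subst hστ
        simp [e, gaudin, diagonalTwist, genericTwist, scaledWeight, Matrix.sum_apply,
          Polynomial.eval_finsetSum]
      · simp [e, gaudin, diagonalTwist, genericTwist, scaledWeight, Matrix.sum_apply,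
          Polynomial.eval_finsetSum, hστ]
    · simp only [RingHom.comp_apply, hθ, twistHom_X, AlgHom.toRingHom_eq_coe,
        RingHom.coe_coe, AlgHom.commutes]
      ext σ τ : 1
      by_cases hστ : σ = τ
      · subst hστ
        simp [Matrix.algebraMap_matrix_apply, e]
      · simp [Matrix.algebraMap_matrix_apply, e, hστ]
  have hdvd : ∀ g, θ g = 0 → ∃ g', g = Polynomial.X * g' ∧ θ g' = 0 := by
    intro g hg
    have h1 := congrArg (fun M => M 1 1) (RingHom.congr_fun hD g)
    have h2 : g.eval 0 = 0 := by
      have h3 : MvPolynomial.rename (1 : Perm (Fin n)) (g.eval 0) = 0 := by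
        simpa [hg, e] using h1.symm
      have : Function.Injective (MvPolynomial.rename (R := ℂ) (1 : Perm (Fin n))) :=
        MvPolynomial.rename_injective _ (Equiv.injective _)
      exact this (h3.trans (map_zero _).symm)
    rw [← Polynomial.coeff_zero_eq_eval_zero, ← Polynomial.X_dvd_iff] at h2
    obtain ⟨g', rfl⟩ := h2
    refine ⟨g', rfl, hι ?_⟩
    rw [map_mul, hθ, twistHom_X, ← Algebra.smul_def] at hg
    have h4 := congrArg ι hg
    rw [map_smul, map_zero] at h4
    rw [map_zero]
    exact (smul_eq_zero.mp h4).resolve_left Polynomial.X_ne_zero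
  rw [injective_iff_map_eq_zero]
  have key : ∀ d (g : TwistRing n), g.natDegree < d → θ g = 0 → g = 0 := by
    intro d
    induction d with
    | zero => intro g hg; omega
    | succ d ih =>
      intro g hg h0
      obtain ⟨g', rfl, h1⟩ := hdvd g h0
      by_cases hg' : g' = 0
      · simp [hg']
      · rw [Polynomial.natDegree_X_mul hg'] at hg
        exact absurd (ih g' (by omega) h1) hg'
  exact fun g hg => key _ g (Nat.lt_succ_self _) hg

/-- A Lax matrix with only the zero eigenvalue gives a character of the Gaudin algebra at zero
twist. -/
theorem exists_character (hι : Function.Injective ι)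
    (hH : ∀ i, ι (H i) = gaudin (scaledWeight w) genericTwist i)
    (hgen : Algebra.adjoin (TwistRing n) (Set.range H) = ⊤) (p : Fin n → ℂ)
    (hp : ∀ x, (laxMatrix w p).charpoly.IsRoot x → x = 0) :
    ∃ φ : B →+* ℂ, φ.comp (algebraMap (TwistRing n) B) = twistHom 1 0 ∧ ∀ i, φ (H i) = p i := by
  obtain ⟨φ, hφ⟩ := exists_ringHom_comp_eq_of_isIntegral _ (injective_twistHom w ι H hι hH)
    (isIntegral_twistHom w ι H hι hH hgen) (twistHom (1 : ℂ) p)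
    (fun c => ⟨_, twistHom_C 1 p c⟩)
  refine ⟨φ, twistRing_hom_ext _ _ (fun c => ?_) (fun i => ?_) ?_, fun i => ?_⟩
  · have h1 := RingHom.congr_fun hφ (Polynomial.C (MvPolynomial.C c))
    rw [RingHom.comp_apply, twistHom_C, twistHom_C] at h1
    rw [RingHom.comp_apply, algebraMap_C_C, h1, twistHom_C]
  · rw [twistHom_genericTwist, RingHom.comp_apply]
    apply hp
    have h1 := congrArg φ (eval_charpoly_laxMatrix_twistHom w ι H hι hH i)
    rw [map_zero, Polynomial.hom_eval₂, hφ, ← Polynomial.eval_map, ← Matrix.charpoly_map,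
      laxMatrix_map] at h1
    simp_rw [twistHom_genericTwist, twistHom_scaledWeight] at h1
    simpa using h1
  · rw [twistHom_X, RingHom.comp_apply]
    have h1 := RingHom.congr_fun hφ Polynomial.X
    rwa [RingHom.comp_apply, twistHom_X, twistHom_X] at h1
  · have h1 := RingHom.congr_fun hφ (genericTwist i)
    rwa [RingHom.comp_apply, twistHom_genericTwist, twistHom_genericTwist] at h1

end Bethe

theorem map_gaudin {n : ℕ} {S S' : Type*} [CommRing S] [CommRing S'] (f : S →+* S')
    (w : Fin n → Fin n → S) (y : Fin n → S) (i : Fin n) :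
    f.mapMatrix (gaudin w y i) = gaudin (fun i j => f (w i j)) (fun i => f (y i)) i := by
  ext σ τ
  by_cases hστ : σ = τ
  · subst hστ
    simp [gaudin, diagonalTwist, Matrix.sum_apply, rightTranslation]
  · simp [gaudin, diagonalTwist, Matrix.sum_apply, hστ, rightTranslation, apply_ite f]

/-- The matrix-valued Lax matrix whose momenta are the untwisted Gaudin Hamiltonians. -/
noncomputable def quantumLax {n : ℕ} (w : Fin n → Fin n → ℂ) :
    Matrix (Fin n) (Fin n) (Matrix (Perm (Fin n)) (Perm (Fin n)) ℂ) :=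
  laxMatrix (fun i j => algebraMap ℂ _ (w i j)) (gaudin w 0)

theorem charpoly_quantumLax_isRoot_of_algHom {n : ℕ} {B : Type*} [CommRing B]
    [Algebra (TwistRing n) B] [Algebra ℂ B] [IsScalarTower ℂ (TwistRing n) B]
    (w : Fin n → Fin n → ℂ)
    (ι : B →ₐ[TwistRing n] Matrix (Perm (Fin n)) (Perm (Fin n)) (TwistRing n)) (H : Fin n → B)
    (hι : Function.Injective ι)
    (hH : ∀ i, ι (H i) = gaudin (scaledWeight w) genericTwist i)
    (hgen : Algebra.adjoin (TwistRing n) (Set.range H) = ⊤) (p : Fin n → ℂ)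
    (hp : ∀ x, (laxMatrix w p).charpoly.IsRoot x → x = 0) (c : Fin n → ℂ) (m : ℕ) :
    (∑ j, c j • (quantumLax w ^ m *ᵥ 1) j).charpoly.IsRoot
      (∑ j, c j * (laxMatrix w p ^ m *ᵥ 1) j) := by
  obtain ⟨φ, hφ, hφH⟩ := exists_character w ι H hι hH hgen p hp
  let L : Matrix (Fin n) (Fin n) B :=
    laxMatrix (fun i j => algebraMap (TwistRing n) B (scaledWeight w i j)) H
  let b : B := ∑ j, algebraMap (TwistRing n) B (Polynomial.C (MvPolynomial.C (c j))) *
    (L ^ m *ᵥ 1) j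
  have hs : ∀ i j, twistHom (n := n) (1 : ℂ) 0 (scaledWeight w i j) = w i j := fun i j => by
    rw [twistHom_scaledWeight]; simp
  have h1 : φ b = ∑ j, c j * (laxMatrix w p ^ m *ᵥ 1) j := by
    have hφ' : ∀ r, φ (algebraMap (TwistRing n) B r) = twistHom 1 0 r := RingHom.congr_fun hφ
    simp only [b, L, map_sum, map_mul, map_laxMatrix_pow_mulVec, hφ', hs, twistHom_C, hφH]
    simp
  have h2 : (twistHom (n := n) (1 : ℂ) 0).mapMatrix (ι b) =
      ∑ j, c j • (quantumLax w ^ m *ᵥ 1) j := by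
    let F : B →+* Matrix (Perm (Fin n)) (Perm (Fin n)) ℂ :=
      (twistHom (n := n) (1 : ℂ) 0).mapMatrix.comp ι.toRingHom
    have hF : ∀ r, F (algebraMap (TwistRing n) B r) = algebraMap ℂ _ (twistHom 1 0 r) := by
      intro r
      simp only [F, RingHom.comp_apply, AlgHom.toRingHom_eq_coe, RingHom.coe_coe,
        AlgHom.commutes]
      ext σ τ
      by_cases hστ : σ = τ <;> simp [Matrix.algebraMap_matrix_apply, hστ]
    have hFH : ∀ i, F (H i) = gaudin w 0 i := by
      intro i
      simp only [F, RingHom.comp_apply, AlgHom.toRingHom_eq_coe, RingHom.coe_coe, hH, map_gaudin,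
        hs, twistHom_genericTwist]
    change F b = _
    simp only [b, L, map_sum, map_mul, map_laxMatrix_pow_mulVec, hF, hFH, hs, twistHom_C]
    refine Finset.sum_congr rfl fun j _ => ?_
    rw [Algebra.algebraMap_eq_smul_one, smul_mul_assoc, one_mul]
    rfl
  have h3 := charpoly_isRoot_of_algHom_injective ι hι φ b
  rwa [hφ, h1, h2] at h3

open scoped IsMulCommutative in
theorem charpoly_quantumLax_isRoot {n : ℕ} (w : Fin n → Fin n → ℂ) (hdiag : ∀ i, w i i = 0)
    (hanti : ∀ i j, w j i = -w i j)
    (hyb : ∀ i k m, i ≠ k → i ≠ m → k ≠ m →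
      w i m * w k m - w i k * w k m - w i m * w k i = 0) (p : Fin n → ℂ)
    (hp : ∀ x, (laxMatrix w p).charpoly.IsRoot x → x = 0) (c : Fin n → ℂ) (m : ℕ) :
    (∑ j, c j • (quantumLax w ^ m *ᵥ 1) j).charpoly.IsRoot
      (∑ j, c j * (laxMatrix w p ^ m *ᵥ 1) j) := by
  let G : Fin n → Matrix (Perm (Fin n)) (Perm (Fin n)) (TwistRing n) :=
    gaudin (scaledWeight w) genericTwist
  have hcomm : ∀ x ∈ Set.range G, ∀ y ∈ Set.range G, x * y = y * x := by
    rintro _ ⟨i, rfl⟩ _ ⟨k, rfl⟩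
    refine commute_gaudin _ _ (fun i => ?_) (fun i j => ?_) (fun i k m h1 h2 h3 => ?_) i k
    · simp [scaledWeight, hdiag]
    · rw [scaledWeight, scaledWeight, hanti i j, map_neg, map_neg]
      ring
    · have h := congrArg (fun c => (Polynomial.X : TwistRing n) ^ 2 *
        Polynomial.C (MvPolynomial.C c)) (hyb i k m h1 h2 h3)
      simp only [map_sub, map_mul, map_zero, mul_zero] at h
      rw [← h]
      simp only [scaledWeight]
      ring
  have := Algebra.isMulCommutative_adjoin (TwistRing n) hcomm
  have hmem : ∀ i, G i ∈ Algebra.adjoin (TwistRing n) (Set.range G) :=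
    fun i => Algebra.subset_adjoin ⟨i, rfl⟩
  refine charpoly_quantumLax_isRoot_of_algHom (B := Algebra.adjoin (TwistRing n) (Set.range G)) w
    (Algebra.adjoin (TwistRing n) (Set.range G)).val (fun i => ⟨G i, hmem i⟩)
    Subtype.val_injective (fun i => rfl) ?_ p hp c m
  have h := Algebra.adjoin_adjoin_coe_preimage (R := TwistRing n) (s := Set.range G)
  rw [← h]
  congr 1
  ext x
  constructor
  · rintro ⟨i, rfl⟩
    exact ⟨i, rfl⟩
  · rintro ⟨i, hi⟩
    exact ⟨i, Subtype.ext hi⟩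

theorem sum_prod_inv_sub_mul_prod_sub {ι K : Type*} [DecidableEq ι] [Field K] {s : Finset ι}
    (hs : s.Nonempty) {z : ι → K} (hz : Set.InjOn z s) :
    ∑ j ∈ s, Polynomial.C (∏ l ∈ s.erase j, (z j - z l)⁻¹) *
      ∏ l ∈ s.erase j, (Polynomial.X - Polynomial.C (z l)) = 1 := by
  rw [← Lagrange.sum_basis hz hs]
  refine Finset.sum_congr rfl fun j _ => ?_
  rw [map_prod, ← Finset.prod_mul_distrib]
  rfl

theorem sum_inv_sub_mul_prod_inv_sub {ι K : Type*} [DecidableEq ι] [Field K] {s : Finset ι}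
    (hs : s.Nonempty) {z : ι → K} (hz : Set.InjOn z s) {x : K} (hx : ∀ j ∈ s, x ≠ z j) :
    ∑ j ∈ s, (x - z j)⁻¹ * ∏ l ∈ s.erase j, (z j - z l)⁻¹ = ∏ l ∈ s, (x - z l)⁻¹ := by
  have h := congrArg (Polynomial.eval x) (sum_prod_inv_sub_mul_prod_sub hs hz)
  simp only [Polynomial.eval_finsetSum, Polynomial.eval_mul, Polynomial.eval_C,
    Polynomial.eval_prod, Polynomial.eval_sub, Polynomial.eval_X, Polynomial.eval_one] at h
  rw [← one_mul (∏ l ∈ s, (x - z l)⁻¹), ← h, Finset.sum_mul]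
  refine Finset.sum_congr rfl fun j hj => ?_
  rw [← Finset.mul_prod_erase s _ hj, Finset.prod_inv_distrib (f := fun l => x - z l)]
  have : ∏ l ∈ s.erase j, (x - z l) ≠ 0 :=
    Finset.prod_ne_zero_iff.mpr fun l hl => sub_ne_zero.mpr (hx l (Finset.mem_of_mem_erase hl))
  field_simp

theorem sum_inv_sub_sq_mul_prod_inv_sub {ι K : Type*} [DecidableEq ι] [Field K] {s : Finset ι}
    {z : ι → K} (hz : Set.InjOn z s) {x : K} (hx : ∀ j ∈ s, x ≠ z j) :
    ∑ j ∈ s, (x - z j)⁻¹ ^ 2 * ∏ l ∈ s.erase j, (z j - z l)⁻¹ =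
      (∑ j ∈ s, (x - z j)⁻¹) * ∏ l ∈ s, (x - z l)⁻¹ := by
  rcases s.eq_empty_or_nonempty with rfl | hs
  · simp
  have h := congrArg (fun p => Polynomial.eval x (Polynomial.derivative p))
    (sum_prod_inv_sub_mul_prod_sub hs hz)
  simp only [Polynomial.derivative_sum, Polynomial.derivative_mul, Polynomial.derivative_C,
    zero_mul, zero_add, Polynomial.derivative_prod_finset, Polynomial.derivative_sub,
    Polynomial.derivative_X, sub_zero, mul_one, Polynomial.eval_finsetSum, Polynomial.eval_mul,
    Polynomial.eval_C, Polynomial.eval_prod, Polynomial.eval_sub, Polynomial.eval_X,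
    Polynomial.derivative_one, Polynomial.eval_zero] at h
  have h1 : ∑ j ∈ s, (x - z j)⁻¹ * (∏ l ∈ s.erase j, (z j - z l)⁻¹) *
      ∑ l ∈ s.erase j, (x - z l)⁻¹ = 0 := by
    rw [← zero_mul (∏ l ∈ s, (x - z l)⁻¹), ← h, Finset.sum_mul]
    refine Finset.sum_congr rfl fun j hj => ?_
    rw [Finset.mul_sum, Finset.mul_sum, Finset.sum_mul]
    refine Finset.sum_congr rfl fun b hb => ?_
    generalize ∏ l ∈ s.erase j, (z j - z l)⁻¹ = c
    rw [← Finset.mul_prod_erase s _ hj, ← Finset.mul_prod_erase (s.erase j) _ hb,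
      Finset.prod_inv_distrib (f := fun l => x - z l)]
    have : ∏ l ∈ (s.erase j).erase b, (x - z l) ≠ 0 :=
      Finset.prod_ne_zero_iff.mpr fun l hl => sub_ne_zero.mpr
        (hx l (Finset.mem_of_mem_erase (Finset.mem_of_mem_erase hl)))
    field_simp
  rw [← sum_inv_sub_mul_prod_inv_sub hs hz hx, ← sub_eq_zero, Finset.mul_sum,
    ← Finset.sum_sub_distrib, ← neg_eq_zero, ← h1, ← Finset.sum_neg_distrib]
  refine Finset.sum_congr rfl fun j hj => ?_
  rw [← Finset.add_sum_erase s _ hj]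
  ring

/-- The sign of `g` if `g` is supported in `X`, and zero otherwise. -/
noncomputable def alternatorCoeff {n : ℕ} (X : Finset (Fin n)) (g : Perm (Fin n)) : ℂ :=
  if ∀ l, l ∉ X → g l = l then ((Perm.sign g : ℤ) : ℂ) else 0

/-- The antisymmetrizer of the symmetric group on `X`, acting by right translations. -/
noncomputable def alternator {n : ℕ} (X : Finset (Fin n)) :
    Matrix (Perm (Fin n)) (Perm (Fin n)) ℂ :=
  ∑ g, alternatorCoeff X g • rightTranslation ℂ g

theorem swap_mul_alternator {n : ℕ} (X : Finset (Fin n)) (i j : Fin n) :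
    rightTranslation ℂ (swap i j) * alternator X =
      ∑ g, alternatorCoeff X (swap i j * g) • rightTranslation ℂ g := by
  rw [alternator, Finset.mul_sum]
  refine Fintype.sum_equiv (Equiv.mulLeft (swap i j)) _ _ fun g => ?_
  simp [← mul_assoc]

theorem alternatorCoeff_swap_mul {n : ℕ} {X : Finset (Fin n)} {i j : Fin n} (hij : i ≠ j)
    (hi : i ∈ X) (hj : j ∈ X) (g : Perm (Fin n)) :
    alternatorCoeff X (swap i j * g) = -alternatorCoeff X g := by
  have h : (∀ l, l ∉ X → (swap i j * g) l = l) ↔ ∀ l, l ∉ X → g l = l := by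
    refine forall₂_congr fun l hl => ?_
    have h1 : swap i j l = l :=
      swap_apply_of_ne_of_ne (fun h => hl (h ▸ hi)) (fun h => hl (h ▸ hj))
    rw [Perm.mul_apply, swap_apply_eq_iff, h1]
  simp only [alternatorCoeff, h, Perm.sign_mul, Perm.sign_swap hij]
  split_ifs <;> simp

theorem swap_mul_alternator_of_mem {n : ℕ} {X : Finset (Fin n)} {i j : Fin n} (hij : i ≠ j)
    (hi : i ∈ X) (hj : j ∈ X) :
    rightTranslation ℂ (swap i j) * alternator X = -alternator X := by
  rw [swap_mul_alternator, alternator, ← Finset.sum_neg_distrib]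
  simp [alternatorCoeff_swap_mul hij hi hj]

theorem alternatorCoeff_eq_sub_sum {n : ℕ} {Y : Finset (Fin n)} {i : Fin n} (hi : i ∈ Y)
    (g : Perm (Fin n)) :
    alternatorCoeff Y g = alternatorCoeff (Y.erase i) g -
      ∑ j ∈ Y.erase i, alternatorCoeff (Y.erase j) (swap i j * g) := by
  have h1 : ∀ j ∈ Y.erase i, alternatorCoeff (Y.erase j) (swap i j * g) =
      if g j = i then -alternatorCoeff Y g else 0 := by
    intro j hj
    obtain ⟨hji, hjY⟩ := Finset.mem_erase.mp hj
    have h : (∀ l, l ∉ Y.erase j → (swap i j * g) l = l) ↔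
        g j = i ∧ ∀ l, l ∉ Y → g l = l := by
      constructor
      · intro h
        refine ⟨?_, fun l hl => ?_⟩
        · have := h j (by simp)
          rwa [Perm.mul_apply, swap_apply_eq_iff, swap_apply_right] at this
        · have := h l (by simp [hl])
          have hl1 : swap i j l = l :=
            swap_apply_of_ne_of_ne (fun h => hl (h ▸ hi)) (fun h => hl (h ▸ hjY))
          rwa [Perm.mul_apply, swap_apply_eq_iff, hl1] at this
      · rintro ⟨h2, h3⟩ l hl
        rw [Perm.mul_apply, swap_apply_eq_iff]
        by_cases hlj : l = j
        · rw [hlj, h2, swap_apply_right]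
        · have hlY : l ∉ Y := fun h => hl (Finset.mem_erase.mpr ⟨hlj, h⟩)
          have hli : l ≠ i := fun h => hlY (h ▸ hi)
          rw [h3 l hlY, swap_apply_of_ne_of_ne hli hlj]
    simp only [alternatorCoeff, h, Perm.sign_mul, Perm.sign_swap hji.symm]
    split_ifs <;> simp_all
  have h2 : alternatorCoeff (Y.erase i) g = if g i = i then alternatorCoeff Y g else 0 := by
    have h : (∀ l, l ∉ Y.erase i → g l = l) ↔ g i = i ∧ ∀ l, l ∉ Y → g l = l := by
      constructor
      · intro h
        exact ⟨h i (by simp), fun l hl => h l (by simp [hl])⟩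
      · rintro ⟨h2, h3⟩ l hl
        by_cases hli : l = i
        · rw [hli, h2]
        · exact h3 l fun h => hl (Finset.mem_erase.mpr ⟨hli, h⟩)
    simp only [alternatorCoeff, h]
    split_ifs <;> simp_all
  rw [Finset.sum_congr rfl h1, h2]
  have h3 : (if g i = i then alternatorCoeff Y g else 0) -
      (∑ j ∈ Y.erase i, if g j = i then -alternatorCoeff Y g else 0) =
      ∑ j ∈ Y, if g j = i then alternatorCoeff Y g else 0 := by
    rw [← Finset.add_sum_erase Y _ hi, sub_eq_add_neg, ← Finset.sum_neg_distrib]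
    congr 1
    refine Finset.sum_congr rfl fun j _ => ?_
    split_ifs <;> simp
  rw [h3]
  by_cases hg : g⁻¹ i ∈ Y
  · rw [Finset.sum_eq_single (g⁻¹ i)]
    · simp
    · intro b _ hb
      rw [if_neg fun h => hb (by rw [← h]; simp)]
    · exact fun h => absurd hg h
  · have h4 : alternatorCoeff Y g = 0 := by
      rw [alternatorCoeff, if_neg]
      intro h
      have h5 : i = g⁻¹ i := by simpa using h _ hg
      exact hg (h5 ▸ hi)
    simp [h4]

theorem alternator_eq_sub_sum {n : ℕ} {Y : Finset (Fin n)} {i : Fin n} (hi : i ∈ Y) :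
    alternator Y = alternator (Y.erase i) -
      ∑ j ∈ Y.erase i, rightTranslation ℂ (swap i j) * alternator (Y.erase j) := by
  simp_rw [swap_mul_alternator]
  rw [Finset.sum_comm, alternator, alternator, ← Finset.sum_sub_distrib]
  refine Finset.sum_congr rfl fun g _ => ?_
  rw [alternatorCoeff_eq_sub_sum hi, sub_smul, Finset.sum_smul]

theorem alternator_singleton {n : ℕ} (i : Fin n) : alternator {i} = 1 := by
  rw [alternator, Finset.sum_eq_single 1]
  · simp [alternatorCoeff]
  · intro g _ hg
    rw [alternatorCoeff, if_neg, zero_smul]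
    intro h
    apply hg
    have h1 : ∀ l, l ≠ i → g l = l := fun l hl => h l (by simpa using hl)
    ext1 l
    by_cases hl : l = i
    · subst hl
      by_contra h2
      exact h2 (g.injective (h1 _ h2))
    · simp [h1 l hl]
  · simp

/-- The Calogero–Moser interaction weights of the points `z`. -/
noncomputable def cauchyWeight {n : ℕ} (z : Fin n → ℂ) (i j : Fin n) : ℂ := (z i - z j)⁻¹

theorem cauchyWeight_self {n : ℕ} (z : Fin n → ℂ) (i : Fin n) : cauchyWeight z i i = 0 := by
  simp [cauchyWeight]

theorem cauchyWeight_swap {n : ℕ} (z : Fin n → ℂ) (i j : Fin n) :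
    cauchyWeight z j i = -cauchyWeight z i j := by
  rw [cauchyWeight, cauchyWeight, ← inv_neg, neg_sub]

theorem quantumLax_mulVec {n : ℕ} (w : Fin n → Fin n → ℂ)
    (v : Fin n → Matrix (Perm (Fin n)) (Perm (Fin n)) ℂ) (i : Fin n) :
    (quantumLax w *ᵥ v) i =
      (∑ j, w i j • v j) - ∑ j, w i j • (rightTranslation ℂ (swap i j) * v i) := by
  have h0 : diagonalTwist (0 : Fin n → ℂ) i = 0 := by
    ext σ τ
    simp [diagonalTwist, Matrix.diagonal_apply]
  have h1 : gaudin w 0 i * v i = -∑ j, w i j • (rightTranslation ℂ (swap i j) * v i) := by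
    rw [gaudin, h0, zero_sub, neg_mul, Finset.sum_mul]
    simp_rw [smul_mul_assoc]
  rw [quantumLax, laxMatrix, Matrix.add_mulVec, Pi.add_apply, Matrix.mulVec_diagonal, h1,
    add_comm, ← sub_eq_add_neg]
  congr 1
  simp [Matrix.mulVec, dotProduct, Algebra.algebraMap_eq_smul_one]

theorem sum_powersetCard_succ_ite {n : ℕ} {M : Type*} [AddCommMonoid M] (m : ℕ) (j : Fin n)
    (F : Finset (Fin n) → M) :
    ∑ Y ∈ powersetCard (m + 1) univ, (if j ∈ Y then F (Y.erase j) else 0) =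
      ∑ X ∈ powersetCard m univ, if j ∉ X then F X else 0 := by
  rw [← Finset.sum_filter, ← Finset.sum_filter]
  refine Finset.sum_nbij' (fun Y => Y.erase j) (fun X => insert j X) ?_ ?_ ?_ ?_ ?_
  · intro Y hY
    simp only [mem_filter, mem_powersetCard, subset_univ, true_and] at hY ⊢
    rw [Finset.card_erase_of_mem hY.2, hY.1]
    simp
  · intro X hX
    simp only [mem_filter, mem_powersetCard, subset_univ, true_and] at hX ⊢
    rw [Finset.card_insert_of_notMem hX.2, hX.1]
    simp
  · intro Y hY
    exact Finset.insert_erase (mem_filter.mp hY).2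
  · intro X hX
    exact Finset.erase_insert (mem_filter.mp hX).2
  · intro Y _
    rfl

theorem sum_cauchyWeight_alternator {n : ℕ} {z : Fin n → ℂ} (hz : Function.Injective z)
    (i : Fin n) {X : Finset (Fin n)} (hX : X.Nonempty) :
    (∑ j, cauchyWeight z i j •
        (if j ∈ X then (∏ l ∈ X.erase j, cauchyWeight z j l) • alternator X else 0)) -
      (∑ j, cauchyWeight z i j • (rightTranslation ℂ (swap i j) *
        (if i ∈ X then (∏ l ∈ X.erase i, cauchyWeight z i l) • alternator X else 0))) =
    (if i ∉ X then (∏ l ∈ X, cauchyWeight z i l) • alternator X else 0) -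
      ∑ j, if j ∉ X then (if j ≠ i ∧ i ∈ X then
        (cauchyWeight z i j * ∏ l ∈ X.erase i, cauchyWeight z i l) •
          (rightTranslation ℂ (swap i j) * alternator X) else 0) else 0 := by
  have hsum : (∑ j, cauchyWeight z i j •
        (if j ∈ X then (∏ l ∈ X.erase j, cauchyWeight z j l) • alternator X else 0)) =
      (∑ j ∈ X, cauchyWeight z i j * ∏ l ∈ X.erase j, cauchyWeight z j l) • alternator X := by
    simp only [smul_ite, smul_zero, Finset.sum_ite_mem, Finset.univ_inter, smul_smul,
      Finset.sum_smul]
  rw [hsum]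
  by_cases hi : i ∈ X
  · simp only [hi, not_true_eq_false, if_false, if_true, and_true, zero_sub]
    have hcancel : (∑ j ∈ X, cauchyWeight z i j * ∏ l ∈ X.erase j, cauchyWeight z j l) +
        ∑ j ∈ X, cauchyWeight z i j * ∏ l ∈ X.erase i, cauchyWeight z i l = 0 := by
      rw [← Finset.add_sum_erase X _ hi, ← Finset.add_sum_erase X _ hi, cauchyWeight_self,
        zero_mul, zero_add, zero_add, ← Finset.sum_mul]
      have h := sum_inv_sub_sq_mul_prod_inv_sub (s := X.erase i) (z := z) hz.injOn (x := z i)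
        (fun j hj h => (Finset.ne_of_mem_erase hj) (hz h).symm)
      have h2 : ∑ j ∈ X.erase i, cauchyWeight z i j * ∏ l ∈ X.erase j, cauchyWeight z j l =
          -∑ j ∈ X.erase i, (z i - z j)⁻¹ ^ 2 * ∏ l ∈ (X.erase i).erase j, (z j - z l)⁻¹ := by
        rw [← Finset.sum_neg_distrib]
        refine Finset.sum_congr rfl fun j hj => ?_
        have hij : i ∈ X.erase j := Finset.mem_erase.mpr ⟨(Finset.ne_of_mem_erase hj).symm, hi⟩
        rw [← Finset.mul_prod_erase _ _ hij, Finset.erase_right_comm, cauchyWeight_swap z i j]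
        simp only [cauchyWeight]
        ring
      rw [h2, h]
      simp only [cauchyWeight]
      ring
    have hsplit : ∀ j, cauchyWeight z i j • (rightTranslation ℂ (swap i j) *
        (∏ l ∈ X.erase i, cauchyWeight z i l) • alternator X) =
        (if j ∈ X then -((cauchyWeight z i j * ∏ l ∈ X.erase i, cauchyWeight z i l) •
          alternator X) else 0) +
        (if j ∉ X then (if j ≠ i then
          (cauchyWeight z i j * ∏ l ∈ X.erase i, cauchyWeight z i l) •
            (rightTranslation ℂ (swap i j) * alternator X) else 0) else 0) := by
      intro j
      rw [mul_smul_comm, smul_smul]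
      by_cases hj : j ∈ X
      · by_cases hij : i = j
        · subst hij
          simp [cauchyWeight_self]
        · simp [hj, swap_mul_alternator_of_mem hij hi hj]
      · have hji : j ≠ i := fun h => hj (h ▸ hi)
        simp [hj, hji]
    simp_rw [hsplit]
    rw [Finset.sum_add_distrib, ← sub_sub, sub_eq_neg_self.mpr]
    rw [sub_eq_zero, Finset.sum_ite_mem, Finset.univ_inter, Finset.sum_neg_distrib,
      ← Finset.sum_smul, ← neg_smul, eq_neg_of_add_eq_zero_left hcancel]
  · have hne : ∀ j ∈ X, z i ≠ z j := fun j hj h => hi (hz h ▸ hj)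
    have h := sum_inv_sub_mul_prod_inv_sub hX (z := z) hz.injOn hne
    simp only [hi, not_false_eq_true, if_true, if_false, and_false, mul_zero, smul_zero,
      Finset.sum_const_zero, sub_zero, ite_self]
    exact congrArg (fun c => c • alternator X) h

theorem quantumLax_pow_mulVec_one {n : ℕ} {z : Fin n → ℂ} (hz : Function.Injective z) (m : ℕ)
    (i : Fin n) :
    (quantumLax (cauchyWeight z) ^ m *ᵥ 1) i = ∑ X ∈ powersetCard (m + 1) univ,
      if i ∈ X then (∏ l ∈ X.erase i, cauchyWeight z i l) • alternator X else 0 := by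
  induction m generalizing i with
  | zero =>
    rw [Finset.sum_eq_single {i}]
    · simp [alternator_singleton]
    · intro X hX hXi
      rw [if_neg]
      intro hi
      obtain ⟨a, rfl⟩ := Finset.card_eq_one.mp (Finset.mem_powersetCard.mp hX).2
      exact hXi (by rw [Finset.mem_singleton.mp hi])
    · simp
  | succ m ih =>
    rw [pow_succ', ← Matrix.mulVec_mulVec, quantumLax_mulVec]
    simp_rw [ih, Finset.mul_sum, Finset.smul_sum]
    rw [Finset.sum_comm, Finset.sum_comm (s := univ), ← Finset.sum_sub_distrib,
      Finset.sum_congr rfl fun X hX => sum_cauchyWeight_alternator hz i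
        (Finset.card_pos.mp (by rw [(Finset.mem_powersetCard.mp hX).2]; omega)),
      Finset.sum_sub_distrib, Finset.sum_comm (t := univ),
      ← sum_powersetCard_succ_ite (m + 1) i fun X =>
        (∏ l ∈ X, cauchyWeight z i l) • alternator X]
    rw [Finset.sum_congr rfl fun j _ => (sum_powersetCard_succ_ite (m + 1) j fun X =>
        if j ≠ i ∧ i ∈ X then
        (cauchyWeight z i j * ∏ l ∈ X.erase i, cauchyWeight z i l) •
          (rightTranslation ℂ (swap i j) * alternator X) else 0).symm,
      Finset.sum_comm (s := univ), ← Finset.sum_sub_distrib]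
    refine Finset.sum_congr rfl fun Y _ => ?_
    by_cases hi : i ∈ Y
    · rw [if_pos hi, if_pos hi, alternator_eq_sub_sum hi, smul_sub, Finset.smul_sum]
      congr 1
      refine (Finset.sum_subset_zero_on_sdiff (subset_univ _) (fun j hj => ?_)
        fun j hj => ?_).symm
      · have hj' : j ∈ Y → j = i := by simpa [not_imp_not] using hj
        split_ifs with h1 h2
        · exact absurd (hj' h1) h2.1
        · rfl
        · rfl
      · obtain ⟨hji, hjY⟩ := Finset.mem_erase.mp hj
        rw [if_pos hjY, if_pos ⟨hji, Finset.mem_erase.mpr ⟨hji.symm, hi⟩⟩,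
          Finset.erase_right_comm, Finset.mul_prod_erase _ _ hj]
    · rw [if_neg hi, if_neg hi]
      simp [hi]

/-- The Bethe operators of the untwisted Gaudin model. -/
noncomputable def betheOperator {n : ℕ} (m : ℕ) (x : ℂ) (z : Fin n → ℂ) :
    Matrix (Perm (Fin n)) (Perm (Fin n)) ℂ :=
  ∑ X ∈ powersetCard (m + 1) univ, (∏ l ∈ Xᶜ, (x - z l)) • alternator X

theorem sum_smul_quantumLax_pow {n : ℕ} {z : Fin n → ℂ} (hz : Function.Injective z) (m : ℕ)
    (x : ℂ) :
    ∑ j, (∏ l ∈ univ.erase j, (x - z l)) • (quantumLax (cauchyWeight z) ^ m *ᵥ 1) j =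
      betheOperator m x z := by
  simp_rw [quantumLax_pow_mulVec_one hz, Finset.smul_sum]
  rw [Finset.sum_comm, betheOperator]
  refine Finset.sum_congr rfl fun X hX => ?_
  have hne : X.Nonempty :=
    Finset.card_pos.mp (by rw [(Finset.mem_powersetCard.mp hX).2]; omega)
  simp only [smul_ite, smul_zero, Finset.sum_ite_mem, Finset.univ_inter, smul_smul,
    ← Finset.sum_smul]
  congr 1
  have h := congrArg (Polynomial.eval x) (sum_prod_inv_sub_mul_prod_sub hne (z := z) hz.injOn)
  simp only [Polynomial.eval_finsetSum, Polynomial.eval_mul, Polynomial.eval_C,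
    Polynomial.eval_prod, Polynomial.eval_sub, Polynomial.eval_X, Polynomial.eval_one] at h
  rw [← mul_one (∏ l ∈ Xᶜ, (x - z l)), ← h, Finset.mul_sum]
  refine Finset.sum_congr rfl fun j hj => ?_
  have hunion : univ.erase j = Xᶜ ∪ X.erase j := by
    ext l
    by_cases hl : l ∈ X
    · simp [hl]
    · simpa [hl] using fun h : l = j => hl (h ▸ hj)
  have hdisj : Disjoint Xᶜ (X.erase j) := by
    rw [Finset.disjoint_left]
    intro l h1 h2
    exact Finset.mem_compl.mp h1 (Finset.mem_of_mem_erase h2)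
  rw [hunion, Finset.prod_union hdisj]
  simp only [cauchyWeight]
  ring

theorem charpoly_betheOperator_isRoot {n : ℕ} {z : Fin n → ℂ} (hz : Function.Injective z)
    (p : Fin n → ℂ) (hp : ∀ x, (laxMatrix (cauchyWeight z) p).charpoly.IsRoot x → x = 0)
    (m : ℕ) (x : ℂ) :
    (betheOperator m x z).charpoly.IsRoot
      (∑ j, (∏ l ∈ univ.erase j, (x - z l)) * (laxMatrix (cauchyWeight z) p ^ m *ᵥ 1) j) := by
  rw [← sum_smul_quantumLax_pow hz]
  refine charpoly_quantumLax_isRoot _ (cauchyWeight_self z) (cauchyWeight_swap z)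
    (fun i k m hik him hkm => ?_) p hp _ m
  have h1 : z i - z k ≠ 0 := sub_ne_zero.mpr fun h => hik (hz h)
  have h2 : z i - z m ≠ 0 := sub_ne_zero.mpr fun h => him (hz h)
  have h3 : z k - z m ≠ 0 := sub_ne_zero.mpr fun h => hkm (hz h)
  rw [cauchyWeight_swap z i k]
  simp only [cauchyWeight]
  field_simp
  ring

theorem conjTranspose_alternator {n : ℕ} (X : Finset (Fin n)) :
    (alternator X)ᴴ = alternator X := by
  have h1 : ∀ g : Perm (Fin n), (rightTranslation ℂ g)ᴴ = rightTranslation ℂ g⁻¹ := by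
    intro g
    ext σ τ
    simp only [rightTranslation, MonoidHom.coe_mk, OneHom.coe_mk, Matrix.conjTranspose_apply,
      Matrix.of_apply, eq_mul_inv_iff_mul_eq]
    by_cases h : τ * g = σ
    · simp [h]
    · simp [h, Ne.symm h]
  have h2 : ∀ g : Perm (Fin n), star (alternatorCoeff X g) = alternatorCoeff X g⁻¹ := by
    intro g
    have : (∀ l, l ∉ X → g l = l) ↔ ∀ l, l ∉ X → g⁻¹ l = l :=
      forall₂_congr fun l _ => by rw [Perm.inv_eq_iff_eq, eq_comm]
    simp only [alternatorCoeff, this, Perm.sign_inv]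
    split_ifs <;> simp
  rw [alternator, Matrix.conjTranspose_sum]
  refine Fintype.sum_equiv (Equiv.inv _) _ _ fun g => ?_
  simp [Matrix.conjTranspose_smul, h1, h2]

theorem isHermitian_betheOperator {n : ℕ} (m : ℕ) {x : ℂ} (hx : x.im = 0) {z : Fin n → ℂ}
    (hz : ∀ i, (z i).im = 0) : (betheOperator m x z).IsHermitian := by
  rw [Matrix.IsHermitian, betheOperator, Matrix.conjTranspose_sum]
  refine Finset.sum_congr rfl fun X _ => ?_
  rw [Matrix.conjTranspose_smul, conjTranspose_alternator, star_prod]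
  congr 1
  refine Finset.prod_congr rfl fun l _ => ?_
  rw [star_sub]
  congr 1
  · exact Complex.conj_eq_iff_im.mpr hx
  · exact Complex.conj_eq_iff_im.mpr (hz l)

theorem im_eq_zero_of_charpoly_isRoot {ι : Type*} [Fintype ι] [DecidableEq ι]
    {A : Matrix ι ι ℂ} (hA : A.IsHermitian) {a : ℂ} (ha : A.charpoly.IsRoot a) : a.im = 0 := by
  rw [hA.charpoly_eq, Polynomial.IsRoot, Polynomial.eval_prod, Finset.prod_eq_zero_iff] at ha
  obtain ⟨i, -, hi⟩ := ha
  simp only [Polynomial.eval_sub, Polynomial.eval_X, Polynomial.eval_C, sub_eq_zero] at hi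
  simp [hi]

theorem continuous_eval_charpoly_betheOperator {n : ℕ} (m : ℕ) (x : ℂ) :
    Continuous fun q : ℂ × (Fin n → ℂ) => (betheOperator m x q.2).charpoly.eval q.1 := by
  simp_rw [Matrix.eval_charpoly]
  refine Continuous.matrix_det (Continuous.sub ?_ ?_)
  · exact (Continuous.matrix_diagonal (continuous_pi fun _ => continuous_fst))
  · unfold betheOperator
    fun_prop

theorem eq_zero_of_isIdempotentElem_of_trace_eq_zero {n : ℕ} {E : Matrix (Fin n) (Fin n) ℂ}
    (hE : IsIdempotentElem E) (ht : E.trace = 0) : E = 0 := by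
  have h1 : IsIdempotentElem (Matrix.toLin' E) := by
    rw [IsIdempotentElem, Module.End.mul_eq_comp, ← Matrix.toLin'_mul, hE.eq]
  exact Matrix.toLin'.map_eq_zero_iff.mp
    (LinearMap.IsIdempotentElem.eq_zero_of_trace_eq_zero h1 (by rw [Matrix.trace_toLin'_eq, ht]))

theorem isNilpotent_of_commutator {n : ℕ} {L Z : Matrix (Fin n) (Fin n) ℂ}
    (hZ : Z * L - L * Z = Matrix.of (fun _ _ => 1) - 1) {k : ℕ} (hk : L ^ k *ᵥ 1 = 0) :
    IsNilpotent L := by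
  obtain ⟨r, hr, hX⟩ := Polynomial.exists_eq_pow_rootMultiplicity_mul_and_not_dvd L.charpoly
    L.charpoly_monic.ne_zero 0
  set a := L.charpoly.rootMultiplicity 0
  rw [map_zero, sub_zero] at hr hX
  obtain ⟨u, v, huv⟩ : IsCoprime ((Polynomial.X : Polynomial ℂ) ^ (a + k)) r :=
    ((Polynomial.irreducible_X.coprime_iff_not_dvd).mpr hX).pow_left
  have hCH : Polynomial.aeval L (Polynomial.X ^ a * r) = 0 := by
    rw [← hr, Matrix.aeval_self_charpoly]
  let q : Polynomial ℂ := u * Polynomial.X ^ (a + k)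
  have hq : q = 1 - v * r := eq_sub_of_add_eq huv
  have hidem : IsIdempotentElem (Polynomial.aeval L q) := by
    have h1 : q * q = q - u * Polynomial.X ^ k * v * (Polynomial.X ^ a * r) := by
      nth_rw 2 [hq]
      simp only [q]
      ring
    rw [IsIdempotentElem, ← map_mul, h1, map_sub, map_mul _ _ (_ * r), hCH, mul_zero, sub_zero]
  have hcomm : Commute L (Polynomial.aeval L q) := by
    have h1 := congrArg (Polynomial.aeval L) (mul_comm Polynomial.X q)
    rwa [map_mul _ _ q, map_mul _ q, Polynomial.aeval_X] at h1
  have htrace : (Polynomial.aeval L q).trace = 0 := by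
    have h1 : ((Z * L - L * Z) * Polynomial.aeval L q).trace = 0 := by
      rw [sub_mul, Matrix.trace_sub, mul_assoc, hcomm.eq, ← mul_assoc, Matrix.trace_mul_comm,
        ← mul_assoc, sub_self]
    have h2 : Polynomial.aeval L q *ᵥ 1 = 0 := by
      simp only [q, map_mul, map_pow, Polynomial.aeval_X]
      rw [pow_add, ← mul_assoc, ← Matrix.mulVec_mulVec, hk, Matrix.mulVec_zero]
    have h3 : (Matrix.of (fun _ _ => (1 : ℂ)) * Polynomial.aeval L q).trace = 0 := by
      rw [Matrix.trace_mul_comm]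
      refine Finset.sum_eq_zero fun i _ => ?_
      simpa [Matrix.mul_apply, Matrix.mulVec, dotProduct] using congrFun h2 i
    rw [hZ, sub_mul, Matrix.trace_sub, h3, one_mul, zero_sub, neg_eq_zero] at h1
    exact h1
  have hzero := eq_zero_of_isIdempotentElem_of_trace_eq_zero hidem htrace
  refine ⟨a, ?_⟩
  have h1 : (Polynomial.X : Polynomial ℂ) ^ a = Polynomial.X ^ a * q +
      v * (Polynomial.X ^ a * r) := by
    rw [hq]
    ring
  have h2 := congrArg (Polynomial.aeval L) h1
  rwa [map_add, map_mul _ _ q, map_mul _ v, hCH, hzero, mul_zero, mul_zero, add_zero, map_pow,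
    Polynomial.aeval_X] at h2

theorem eq_zero_of_charpoly_isRoot_of_isNilpotent {n : ℕ} {L : Matrix (Fin n) (Fin n) ℂ}
    (hL : IsNilpotent L) {x : ℂ} (hx : L.charpoly.IsRoot x) : x = 0 := by
  obtain ⟨N, hN⟩ := hL
  rcases isEmpty_or_nonempty (Fin n) with h | h
  · rw [Matrix.charpoly_isEmpty] at hx
    simp at hx
  · have h1 := spectrum.pow_mem_pow L N (Matrix.mem_spectrum_iff_isRoot_charpoly.mpr hx)
    rw [hN, spectrum.zero_eq, Set.mem_singleton_iff] at h1
    exact eq_zero_of_pow_eq_zero h1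

theorem laxMatrix_commutator {n : ℕ} {z : Fin n → ℂ} (hz : Function.Injective z)
    (p : Fin n → ℂ) :
    Matrix.diagonal z * laxMatrix (cauchyWeight z) p -
      laxMatrix (cauchyWeight z) p * Matrix.diagonal z = Matrix.of (fun _ _ => 1) - 1 := by
  ext i j
  by_cases hij : i = j
  · subst hij
    simp [laxMatrix, cauchyWeight]
    ring
  · have : z i - z j ≠ 0 := sub_ne_zero.mpr fun h => hij (hz h)
    simp [laxMatrix, cauchyWeight, hij]
    field_simp

/-- If the constant vector is killed by a power of the Lax matrix, the values of the Krylov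
vectors at `x` are eigenvalues of the Bethe operators. -/
theorem charpoly_betheOperator_isRoot_of_pow_mulVec {n : ℕ} {z : Fin n → ℂ}
    (hz : Function.Injective z) (p : Fin n → ℂ) {k : ℕ}
    (hk : laxMatrix (cauchyWeight z) p ^ k *ᵥ 1 = 0) (m : ℕ) (x : ℂ) :
    (betheOperator m x z).charpoly.IsRoot
      (∑ j, (∏ l ∈ univ.erase j, (x - z l)) * (laxMatrix (cauchyWeight z) p ^ m *ᵥ 1) j) :=
  charpoly_betheOperator_isRoot hz p (fun _ => eq_zero_of_charpoly_isRoot_of_isNilpotent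
    (isNilpotent_of_commutator (laxMatrix_commutator hz p) hk)) m x

theorem eq_sum_of_degree_lt {n : ℕ} {z : Fin n → ℂ} (hz : Function.Injective z)
    {f : Polynomial ℂ} (hf : f.degree < n) :
    f = ∑ i, Polynomial.C (f.eval (z i) / ∏ l ∈ univ.erase i, (z i - z l)) *
      ∏ l ∈ univ.erase i, (Polynomial.X - Polynomial.C (z l)) := by
  have h := Lagrange.eq_interpolate (s := univ) (v := z) (f := f) hz.injOn (by simpa using hf)
  nth_rw 1 [h]
  rw [Lagrange.interpolate_apply]
  refine Finset.sum_congr rfl fun i _ => ?_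
  have hb : Lagrange.basis univ z i = Polynomial.C (∏ l ∈ univ.erase i, (z i - z l)⁻¹) *
      ∏ l ∈ univ.erase i, (Polynomial.X - Polynomial.C (z l)) := by
    rw [map_prod, ← Finset.prod_mul_distrib]
    rfl
  rw [hb, ← mul_assoc, ← map_mul, Finset.prod_inv_distrib (f := fun l => z i - z l),
    div_eq_mul_inv]

theorem eval_derivative_prod_erase {n : ℕ} {z : Fin n → ℂ} (hz : Function.Injective z)
    (i l : Fin n) :
    (Polynomial.derivative (∏ a ∈ univ.erase l, (Polynomial.X - Polynomial.C (z a)))).eval (z i) =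
      (∏ a ∈ univ.erase i, (z i - z a)) *
        (if l = i then ∑ a ∈ univ.erase i, (z i - z a)⁻¹ else (z i - z l)⁻¹) := by
  have hne : ∀ a, a ≠ i → z i - z a ≠ 0 := fun a ha => sub_ne_zero.mpr fun h => ha (hz h).symm
  simp only [Polynomial.derivative_prod_finset, Polynomial.derivative_sub,
    Polynomial.derivative_X, Polynomial.derivative_C, sub_zero, mul_one,
    Polynomial.eval_finsetSum, Polynomial.eval_prod, Polynomial.eval_sub, Polynomial.eval_X,
    Polynomial.eval_C]
  split_ifs with hli
  · subst hli
    rw [Finset.mul_sum]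
    refine Finset.sum_congr rfl fun b hb => ?_
    rw [← Finset.mul_prod_erase _ _ hb]
    have := hne b (Finset.ne_of_mem_erase hb)
    field_simp
  · rw [Finset.sum_eq_single i]
    · rw [Finset.erase_right_comm, ← Finset.mul_prod_erase (univ.erase i) _
        (Finset.mem_erase.mpr ⟨hli, mem_univ l⟩)]
      have := hne l hli
      field_simp
    · intro b _ hb
      exact Finset.prod_eq_zero (i := i) (by simp [Ne.symm hb, Ne.symm hli]) (sub_self _)
    · intro h
      simp [Ne.symm hli] at h

/-- A chain of polynomials satisfying the local recursion at the zeros of `W` takes values which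
are eigenvalues of the Bethe operators. -/
theorem charpoly_betheOperator_isRoot_of_recursion {n k : ℕ} {z : Fin n → ℂ}
    (hz : Function.Injective z) {c : ℂ} (hc : c ≠ 0) {A : ℕ → Polynomial ℂ}
    (hA0 : A 0 = -Polynomial.derivative
      (Polynomial.C c * ∏ l, (Polynomial.X - Polynomial.C (z l))))
    (hdeg : ∀ m, (A m).degree < n) (hAk : A k = 0)
    (hrec : ∀ i, ∃ κ, ∀ m < k, (Polynomial.derivative (A m)).eval (z i) + (A (m + 1)).eval (z i) =
      κ * (A m).eval (z i)) {m : ℕ} (hm : m ≤ k) (x : ℂ) :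
    (betheOperator m x z).charpoly.IsRoot (-(-1) ^ m * (A m).eval x / c) := by
  choose κ hκ using hrec
  let ω : Fin n → ℂ := fun i => ∏ l ∈ univ.erase i, (z i - z l)
  have hω : ∀ i, ω i ≠ 0 := fun i => Finset.prod_ne_zero_iff.mpr fun l hl =>
    sub_ne_zero.mpr fun h => Finset.ne_of_mem_erase hl (hz h).symm
  let p : Fin n → ℂ := fun i => (∑ a ∈ univ.erase i, (z i - z a)⁻¹) - κ i
  let L := laxMatrix (cauchyWeight z) p
  let r : ℕ → Fin n → ℂ := fun m i => (A m).eval (z i) / (c * ω i)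
  have hr0 : r 0 = -1 := by
    ext i
    have h1 := eval_derivative_prod_erase hz i i
    have h2 : (A 0).eval (z i) = -(c * ω i) := by
      rw [hA0, ← Finset.mul_prod_erase univ _ (mem_univ i)]
      simp [Polynomial.eval_prod, ω]
    simp only [r, h2, Pi.neg_apply, Pi.one_apply]
    rw [neg_div, div_self (mul_ne_zero hc (hω i))]
  have hexp : ∀ m, A m = Polynomial.C c * ∑ i, Polynomial.C (r m i) *
      ∏ l ∈ univ.erase i, (Polynomial.X - Polynomial.C (z l)) := by
    intro m
    nth_rw 1 [eq_sum_of_degree_lt hz (hdeg m)]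
    rw [Finset.mul_sum]
    refine Finset.sum_congr rfl fun i _ => ?_
    rw [← mul_assoc, ← map_mul]
    congr 2
    have := hω i
    simp only [r]
    change _ / ω i = _
    field_simp
  have hLr : ∀ m < k, L *ᵥ r m = -r (m + 1) := by
    intro m hm
    ext i
    have h1 := hκ i m hm
    have h2 : (Polynomial.derivative (A m)).eval (z i) = c * ω i *
        ((∑ a ∈ univ.erase i, (z i - z a)⁻¹) * r m i + ∑ l, cauchyWeight z i l * r m l) := by
      rw [hexp m]
      simp only [Polynomial.derivative_mul, Polynomial.derivative_C, zero_mul, zero_add,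
        Polynomial.derivative_sum, Polynomial.eval_mul, Polynomial.eval_C,
        Polynomial.eval_finsetSum, eval_derivative_prod_erase hz]
      rw [mul_assoc]
      congr 1
      have h3 : ∀ l, r m l * ((∏ a ∈ univ.erase i, (z i - z a)) *
          (if l = i then ∑ a ∈ univ.erase i, (z i - z a)⁻¹ else (z i - z l)⁻¹)) =
          ω i * ((if l = i then (∑ a ∈ univ.erase i, (z i - z a)⁻¹) * r m i else 0) +
            cauchyWeight z i l * r m l) := by
        intro l
        by_cases hl : l = i
        · subst hl
          simp [cauchyWeight_self, ω]
          ring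
        · simp [hl, cauchyWeight, ω]
          ring
      simp_rw [h3]
      rw [← Finset.mul_sum, Finset.sum_add_distrib, Finset.sum_ite_eq' univ i, if_pos (mem_univ i)]
    have h4 : (L *ᵥ r m) i = p i * r m i + ∑ l, cauchyWeight z i l * r m l := by
      simp only [L, laxMatrix, Matrix.add_mulVec, Pi.add_apply, Matrix.mulVec_diagonal]
      rfl
    have h5 : ∀ m, (A m).eval (z i) = c * ω i * r m i := by
      intro m
      simp only [r]
      rw [mul_div_cancel₀ _ (mul_ne_zero hc (hω i))]
    rw [h2, h5, h5] at h1
    rw [h4, Pi.neg_apply]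
    apply mul_left_cancel₀ (mul_ne_zero hc (hω i))
    simp only [p]
    linear_combination h1
  have hpow : ∀ m ≤ k, r m = -(-1 : ℂ) ^ m • (L ^ m *ᵥ 1) := by
    intro m
    induction m with
    | zero => intro _; simp [hr0]
    | succ m ih =>
      intro hm
      have h1 := hLr m (by omega)
      rw [ih (by omega), Matrix.mulVec_smul, Matrix.mulVec_mulVec, ← pow_succ'] at h1
      rw [← neg_neg (r (m + 1)), ← h1, pow_succ, ← neg_smul]
      congr 1
      ring
  have hk : L ^ k *ᵥ 1 = 0 := by
    have h1 : r k = 0 := by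
      ext i
      simp [r, hAk]
    rw [hpow k le_rfl] at h1
    exact (smul_eq_zero.mp h1).resolve_left (by simp)
  have h := charpoly_betheOperator_isRoot_of_pow_mulVec hz p hk m x
  convert h using 1
  rw [hexp m, hpow m hm]
  simp only [Polynomial.eval_mul, Polynomial.eval_C, Polynomial.eval_finsetSum,
    Polynomial.eval_prod, Polynomial.eval_sub, Polynomial.eval_X, Pi.smul_apply, smul_eq_mul]
  rw [div_eq_iff hc, Finset.sum_mul, Finset.mul_sum, Finset.mul_sum]
  refine Finset.sum_congr rfl fun i _ => ?_
  have h1 : ((-1 : ℂ) ^ m) * (-1) ^ m = 1 := by rw [← mul_pow]; simp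
  simp only [L]
  linear_combination (c * (laxMatrix (cauchyWeight z) p ^ m *ᵥ 1) i *
    ∏ l ∈ univ.erase i, (x - z l)) * h1

/-- The coefficients of the differential operator `F ↦ Wr (g, F)`. -/
noncomputable def wronskianCoeff {k : ℕ} (g : Fin k → Polynomial ℂ) (j : Fin (k + 1)) :
    Polynomial ℂ :=
  (-1) ^ ((j : ℕ) + k) *
    Matrix.det (Matrix.of fun a b : Fin k => Polynomial.derivative^[(j.succAbove a : ℕ)] (g b))

theorem Wr_snoc {k : ℕ} (g : Fin k → Polynomial ℂ) (F : Polynomial ℂ) :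
    Wr (Fin.snoc g F : Fin (k + 1) → Polynomial ℂ) =
      ∑ j, wronskianCoeff g j * Polynomial.derivative^[(j : ℕ)] F := by
  rw [Wr, Matrix.det_succ_column _ (Fin.last k)]
  refine Finset.sum_congr rfl fun j _ => ?_
  have h : (Matrix.of fun i j : Fin (k + 1) => Polynomial.derivative^[(i : ℕ)]
      ((Fin.snoc g F : Fin (k + 1) → Polynomial ℂ) j)).submatrix j.succAbove
        (Fin.last k).succAbove =
      Matrix.of fun a b : Fin k => Polynomial.derivative^[(j.succAbove a : ℕ)] (g b) := by
    ext a b : 2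
    simp
  rw [h, wronskianCoeff]
  simp only [Matrix.of_apply, Fin.snoc_last, Fin.val_last]
  ring

theorem sum_wronskianCoeff_mul_eq_zero {k : ℕ} (g : Fin k → Polynomial ℂ) (b : Fin k) :
    ∑ j, wronskianCoeff g j * Polynomial.derivative^[(j : ℕ)] (g b) = 0 := by
  rw [← Wr_snoc, Wr]
  refine Matrix.det_zero_of_column_eq (i := b.castSucc) (j := Fin.last k)
    (Fin.castSucc_lt_last b).ne fun i => ?_
  simp

theorem wronskianCoeff_last {k : ℕ} (g : Fin k → Polynomial ℂ) :
    wronskianCoeff g (Fin.last k) = Wr g := by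
  simp [wronskianCoeff, Wr, ← two_mul]

theorem derivative_det {k : ℕ} (M : Matrix (Fin k) (Fin k) (Polynomial ℂ)) :
    Polynomial.derivative M.det =
      ∑ i, (M.updateRow i fun b => Polynomial.derivative (M i b)).det := by
  simp_rw [← Matrix.det_transpose M, ← Matrix.det_transpose (M.updateRow _ _), Matrix.det_apply]
  rw [Finset.sum_comm, Polynomial.derivative_sum]
  refine Finset.sum_congr rfl fun σ _ => ?_
  rw [Polynomial.derivative_smul, Polynomial.derivative_prod_finset, ← Finset.smul_sum]
  congr 1
  refine Finset.sum_congr rfl fun i _ => ?_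
  rw [← Finset.mul_prod_erase univ _ (mem_univ i), mul_comm]
  congr 1
  · simp
  · refine Finset.prod_congr rfl fun l hl => ?_
    simp [Matrix.updateRow_ne (Finset.ne_of_mem_erase hl)]

theorem wronskianCoeff_castSucc_last {k : ℕ} (g : Fin (k + 1) → Polynomial ℂ) :
    wronskianCoeff g (Fin.last k).castSucc = -Polynomial.derivative (Wr g) := by
  rw [Wr, derivative_det, Finset.sum_eq_single (Fin.last k)]
  · have h : (-1 : Polynomial ℂ) ^ (((Fin.last k).castSucc : ℕ) + (k + 1)) = -1 := by
      simp only [Fin.val_castSucc, Fin.val_last]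
      rw [← add_assoc, ← two_mul, pow_succ, pow_mul]
      simp
    rw [wronskianCoeff, h, neg_one_mul]
    congr 2
    ext a b : 2
    refine Fin.lastCases ?_ (fun a => ?_) a
    · simp [Function.iterate_succ_apply']
    · rw [Matrix.updateRow_ne (Fin.castSucc_lt_last a).ne]
      simp [Fin.succAbove_castSucc_of_lt _ _ (Fin.castSucc_lt_last a)]
  · intro i _ hi
    obtain ⟨i, rfl⟩ := Fin.exists_castSucc_eq.2 hi
    refine Matrix.det_zero_of_row_eq (i := i.castSucc) (j := i.succ) i.castSucc_lt_succ.ne ?_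
    rw [Matrix.updateRow_self, Matrix.updateRow_ne i.castSucc_lt_succ.ne']
    ext b : 1
    simp [Function.iterate_succ_apply']
  · simp

/-- The coefficients of `F ↦ Wr (g, F)` in decreasing order, starting below the leading one. -/
noncomputable def wronskianTail {k : ℕ} (g : Fin (k + 1) → Polynomial ℂ) (m : ℕ) : Polynomial ℂ :=
  if h : m < k + 1 then wronskianCoeff g (Fin.rev ⟨m, h⟩).castSucc else 0

theorem wronskianTail_zero {k : ℕ} (g : Fin (k + 1) → Polynomial ℂ) :
    wronskianTail g 0 = -Polynomial.derivative (Wr g) := by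
  rw [wronskianTail, dif_pos k.succ_pos, ← wronskianCoeff_castSucc_last]
  congr 1

theorem wronskianTail_eq_zero {k : ℕ} (g : Fin (k + 1) → Polynomial ℂ) :
    wronskianTail g (k + 1) = 0 := by
  simp [wronskianTail]

/-- A linear form is determined up to a multiple by the vectors it kills. -/
theorem exists_eq_smul_of_sum_eq_zero {k : ℕ} {B : Matrix (Fin k) (Fin (k + 1)) ℂ}
    {u v : Fin (k + 1) → ℂ} {p : Fin (k + 1)} (hu : u p ≠ 0)
    (hB : (B.submatrix id p.succAbove).det ≠ 0) (hBu : B *ᵥ u = 0) (hBv : B *ᵥ v = 0) :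
    v = (v p / u p) • u := by
  set w := v - (v p / u p) • u with hw
  have hwp : w p = 0 := by simp [hw, hu]
  have hBw : B *ᵥ w = 0 := by
    rw [hw, Matrix.mulVec_sub, Matrix.mulVec_smul, hBu, hBv]
    simp
  have h : (B.submatrix id p.succAbove) *ᵥ (fun a => w (p.succAbove a)) = 0 := by
    rw [← hBw]
    ext b
    simp [Matrix.mulVec, dotProduct, Fin.sum_univ_succAbove _ p, hwp]
  have h' := Matrix.eq_zero_of_mulVec_eq_zero hB h
  have : w = 0 := by
    ext a
    rcases Fin.eq_self_or_eq_succAbove p a with rfl | ⟨c, rfl⟩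
    · exact hwp
    · exact congrFun h' c
  exact sub_eq_zero.1 this

theorem sum_derivative_wronskianCoeff_eq_zero {k : ℕ} (g : Fin k → Polynomial ℂ) {z : ℂ}
    (hz : (Wr g).eval z = 0) (b : Fin k) :
    ∑ j : Fin (k + 1), ((Polynomial.derivative (wronskianCoeff g j)).eval z +
      (Fin.cases 0 (fun i : Fin k => wronskianCoeff g i.castSucc) j : Polynomial ℂ).eval z) *
      (Polynomial.derivative^[(j : ℕ)] (g b)).eval z = 0 := by
  have h := congrArg (fun p => (Polynomial.derivative p).eval z)
    (sum_wronskianCoeff_mul_eq_zero g b)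
  simp only [Polynomial.derivative_sum, Polynomial.derivative_mul, Polynomial.eval_finsetSum,
    Polynomial.eval_add, Polynomial.eval_mul, Finset.sum_add_distrib, map_zero,
    Polynomial.eval_zero, ← Function.iterate_succ_apply'] at h
  rw [Fin.sum_univ_castSucc (fun j : Fin (k + 1) => (wronskianCoeff g j).eval z * _),
    wronskianCoeff_last, hz, zero_mul, add_zero] at h
  simp only [add_mul, Finset.sum_add_distrib]
  rw [← h]
  congr 1
  rw [Fin.sum_univ_succ]
  simp

theorem wronskianTail_recursion {k : ℕ} (g : Fin (k + 1) → Polynomial ℂ) {z : ℂ}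
    (hz : (Wr g).eval z = 0) (hz' : (Polynomial.derivative (Wr g)).eval z ≠ 0) :
    ∃ κ, ∀ m < k + 1, (Polynomial.derivative (wronskianTail g m)).eval z +
      (wronskianTail g (m + 1)).eval z = κ * (wronskianTail g m).eval z := by
  set u : Fin (k + 2) → ℂ := fun j => (wronskianCoeff g j).eval z with hu
  set v : Fin (k + 2) → ℂ := fun j => (Polynomial.derivative (wronskianCoeff g j)).eval z +
      (Fin.cases 0 (fun i : Fin (k + 1) => wronskianCoeff g i.castSucc) j : Polynomial ℂ).eval z
    with hv
  set p : Fin (k + 2) := (Fin.last k).castSucc with hp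
  have hup : u p = -(Polynomial.derivative (Wr g)).eval z := by
    simp [hu, hp, wronskianCoeff_castSucc_last]
  have hup0 : u p ≠ 0 := by rw [hup]; exact neg_ne_zero.2 hz'
  set B : Matrix (Fin (k + 1)) (Fin (k + 2)) ℂ :=
    Matrix.of fun b j => (Polynomial.derivative^[(j : ℕ)] (g b)).eval z with hB
  have hdet : (B.submatrix id p.succAbove).det ≠ 0 := by
    intro h0
    apply hup0
    have : (B.submatrix id p.succAbove).det = (Matrix.det (Matrix.of fun a b : Fin (k + 1) =>
        Polynomial.derivative^[(p.succAbove a : ℕ)] (g b))).eval z := by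
      rw [← Polynomial.coe_evalRingHom, RingHom.map_det, ← Matrix.det_transpose]
      congr 1
    simp only [hu, wronskianCoeff, Polynomial.eval_mul]
    rw [← this, h0, mul_zero]
  have hBu : B *ᵥ u = 0 := by
    ext b
    have := congrArg (Polynomial.eval z) (sum_wronskianCoeff_mul_eq_zero g b)
    simpa [Matrix.mulVec, dotProduct, hB, hu, Polynomial.eval_finsetSum, mul_comm] using this
  have hBv : B *ᵥ v = 0 := by
    ext b
    have := sum_derivative_wronskianCoeff_eq_zero g hz b
    simpa only [Matrix.mulVec, dotProduct, hB, hv, mul_comm, Matrix.of_apply, Pi.zero_apply]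
      using this
  have hmain := exists_eq_smul_of_sum_eq_zero hup0 hdet hBu hBv
  refine ⟨v p / u p, fun m hm => ?_⟩
  have h1 := congrFun hmain (Fin.rev ⟨m, hm⟩).castSucc
  rw [Pi.smul_apply, smul_eq_mul] at h1
  rw [wronskianTail, dif_pos hm]
  refine Eq.trans ?_ h1
  simp only [hv]
  congr 2
  by_cases hm' : m + 1 < k + 1
  · rw [wronskianTail, dif_pos hm']
    have : (Fin.rev ⟨m, hm⟩ : Fin (k + 1)).castSucc =
        (Fin.rev ⟨m + 1, hm'⟩ : Fin (k + 1)).succ := by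
      ext
      simp [Fin.val_rev]
      omega
    rw [this, Fin.cases_succ]
  · obtain rfl : m = k := by omega
    have : (Fin.rev ⟨m, hm⟩ : Fin (m + 1)).castSucc = 0 := by
      ext
      simp [Fin.val_rev]
    rw [this, Fin.cases_zero, wronskianTail_eq_zero]

theorem natDegree_prod_le_and_coeff_prod {ι : Type*} (s : Finset ι) {p : ι → Polynomial ℂ}
    {d : ι → ℕ} (h : ∀ i, (p i).natDegree ≤ d i) :
    (∏ i ∈ s, p i).natDegree ≤ ∑ i ∈ s, d i ∧
      (∏ i ∈ s, p i).coeff (∑ i ∈ s, d i) = ∏ i ∈ s, (p i).coeff (d i) := by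
  classical
  induction s using Finset.induction_on with
  | empty => simp
  | insert a s ha ih =>
    rw [Finset.prod_insert ha, Finset.sum_insert ha, Finset.prod_insert ha, ← ih.2]
    exact ⟨Polynomial.natDegree_mul_le.trans (add_le_add (h a) ih.1),
      Polynomial.coeff_mul_add_eq_of_natDegree_le (h a) ih.1⟩

theorem natDegree_det_le_sum {k : ℕ} {M : Matrix (Fin k) (Fin k) (Polynomial ℂ)} {d : Fin k → ℕ}
    (h : ∀ i b, (M i b).natDegree ≤ d b) : M.det.natDegree ≤ ∑ b, d b := by
  rw [Matrix.det_apply]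
  refine Polynomial.natDegree_sum_le_of_forall_le _ _ fun σ _ => ?_
  refine (Polynomial.natDegree_smul_le _ _).trans ?_
  exact (natDegree_prod_le_and_coeff_prod univ fun b => h (σ b) b).1

theorem coeff_det_sum {k : ℕ} {M : Matrix (Fin k) (Fin k) (Polynomial ℂ)} {d : Fin k → ℕ}
    (h : ∀ i b, (M i b).natDegree ≤ d b) :
    M.det.coeff (∑ b, d b) = (Matrix.of fun i b => (M i b).coeff (d b)).det := by
  rw [Matrix.det_apply, Matrix.det_apply, Polynomial.finsetSum_coeff]
  refine Finset.sum_congr rfl fun σ _ => ?_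
  rw [Polynomial.coeff_smul, (natDegree_prod_le_and_coeff_prod univ fun b => h (σ b) b).2]
  simp

theorem coeff_X_pow_mul_iterate_derivative (p : Polynomial ℂ) (i N : ℕ) :
    (Polynomial.X ^ i * Polynomial.derivative^[i] p).coeff N =
      (N.descFactorial i : ℂ) * p.coeff N := by
  rw [Polynomial.coeff_X_pow_mul']
  split_ifs with h
  · rw [Polynomial.coeff_iterate_derivative, Nat.sub_add_cancel h, nsmul_eq_mul]
  · rw [Nat.descFactorial_eq_zero_iff_lt.2 (not_le.1 h)]
    simp

theorem natDegree_X_pow_mul_iterate_derivative_le {p : Polynomial ℂ} {d : ℕ}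
    (h : p.natDegree ≤ d) (i : ℕ) :
    (Polynomial.X ^ i * Polynomial.derivative^[i] p).natDegree ≤ d := by
  rw [Polynomial.natDegree_le_iff_coeff_eq_zero]
  intro N hN
  rw [coeff_X_pow_mul_iterate_derivative, Polynomial.coeff_eq_zero_of_natDegree_lt (h.trans_lt hN),
    mul_zero]

theorem X_pow_mul_det_iterate_derivative {k : ℕ} (e : Fin k → ℕ) (g : Fin k → Polynomial ℂ) :
    Polynomial.X ^ (∑ a, e a) *
      Matrix.det (Matrix.of fun a b : Fin k => Polynomial.derivative^[e a] (g b)) =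
      Matrix.det (Matrix.of fun a b : Fin k =>
        Polynomial.X ^ e a * Polynomial.derivative^[e a] (g b)) := by
  rw [← Finset.prod_pow_eq_pow_sum, ← Matrix.det_mul_column]
  rfl

theorem natDegree_det_iterate_derivative_add_le {k : ℕ} (e : Fin k → ℕ)
    {g : Fin k → Polynomial ℂ} {d : Fin k → ℕ} (h : ∀ b, (g b).natDegree ≤ d b)
    (h0 : Matrix.det (Matrix.of fun a b : Fin k => Polynomial.derivative^[e a] (g b)) ≠ 0) :
    (Matrix.det (Matrix.of fun a b : Fin k => Polynomial.derivative^[e a] (g b))).natDegree +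
      ∑ a, e a ≤ ∑ b, d b := by
  rw [← Polynomial.natDegree_X_pow_mul _ h0, X_pow_mul_det_iterate_derivative]
  exact natDegree_det_le_sum fun a b => natDegree_X_pow_mul_iterate_derivative_le (h b) (e a)

theorem degree_wronskianCoeff_lt {k n : ℕ} {g : Fin k → Polynomial ℂ} {d : Fin k → ℕ}
    (h : ∀ b, (g b).natDegree ≤ d b) (hn : n + ∑ a : Fin k, (a : ℕ) = ∑ b, d b) (j : Fin k) :
    (wronskianCoeff g j.castSucc).degree < n := by
  set D := Matrix.det (Matrix.of fun a b : Fin k =>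
    Polynomial.derivative^[(j.castSucc.succAbove a : ℕ)] (g b)) with hD
  have hdeg : (wronskianCoeff g j.castSucc).degree ≤ D.degree := by
    rw [wronskianCoeff, ← hD]
    simp
  refine hdeg.trans_lt ?_
  by_cases h0 : D = 0
  · simp [h0]
  rw [Polynomial.degree_eq_natDegree h0, Nat.cast_lt]
  have h1 := natDegree_det_iterate_derivative_add_le (fun a => (j.castSucc.succAbove a : ℕ)) h h0
  have h2 := Fin.sum_univ_succAbove (fun a : Fin (k + 1) => (a : ℕ)) j.castSucc
  rw [Fin.sum_univ_castSucc] at h2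
  simp only [Fin.val_castSucc, Fin.val_last] at h2
  have := j.isLt
  rw [← hD] at h1
  omega

theorem natDegree_Wr_le {k n : ℕ} {g : Fin k → Polynomial ℂ} {d : Fin k → ℕ}
    (h : ∀ b, (g b).natDegree ≤ d b) (hn : n + ∑ a : Fin k, (a : ℕ) = ∑ b, d b) :
    (Wr g).natDegree ≤ n := by
  by_cases h0 : Wr g = 0
  · simp [h0]
  have h1 := natDegree_det_iterate_derivative_add_le (fun a : Fin k => (a : ℕ)) h h0
  change (Wr g).natDegree + _ ≤ _ at h1
  omega

/-- The factor by which the leading coefficients of polynomials of degrees `d` are multiplied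
in their Wronskian. -/
noncomputable def wronskianLeadFactor {k : ℕ} (d : Fin k → ℕ) : ℂ :=
  Matrix.det (Matrix.of fun i b : Fin k => ((d b).descFactorial i : ℂ))

theorem wronskianLeadFactor_ne_zero {k : ℕ} {d : Fin k → ℕ} (hd : Function.Injective d) :
    wronskianLeadFactor d ≠ 0 := by
  have h := Matrix.det_eval_matrixOfPolynomials_eq_det_vandermonde
    (fun b : Fin k => (d b : ℂ)) (fun i => descPochhammer ℂ i)
    (fun i => descPochhammer_natDegree _ _) (fun i => monic_descPochhammer _ _)
  have h' : wronskianLeadFactor d = (Matrix.vandermonde fun b : Fin k => (d b : ℂ)).det := by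
    rw [h, wronskianLeadFactor, ← Matrix.det_transpose]
    congr 1
    ext i b
    simp [descPochhammer_eval_eq_descFactorial]
  rw [h', Matrix.det_vandermonde_ne_zero_iff]
  exact Nat.cast_injective.comp hd

theorem coeff_Wr {k n : ℕ} {g : Fin k → Polynomial ℂ} {d : Fin k → ℕ}
    (h : ∀ b, (g b).natDegree ≤ d b) (hn : n + ∑ a : Fin k, (a : ℕ) = ∑ b, d b) :
    (Wr g).coeff n = wronskianLeadFactor d * ∏ b, (g b).coeff (d b) := by
  rw [← Polynomial.coeff_X_pow_mul _ (∑ a : Fin k, (a : ℕ)), hn, Wr,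
    X_pow_mul_det_iterate_derivative,
    coeff_det_sum (M := Matrix.of fun a b : Fin k =>
      Polynomial.X ^ (a : ℕ) * Polynomial.derivative^[(a : ℕ)] (g b)) fun a b =>
        natDegree_X_pow_mul_iterate_derivative_le (h b) a,
    wronskianLeadFactor, mul_comm, ← Matrix.det_mul_row]
  congr 1
  ext i b
  simp only [Matrix.of_apply, coeff_X_pow_mul_iterate_derivative]
  ring

/-- At simple Wronskians the coefficients of `F ↦ Wr (g, F)` are eigenvalues of Bethe
operators. -/
theorem charpoly_betheOperator_isRoot_of_Wr_eq {k n : ℕ} {g : Fin (k + 1) → Polynomial ℂ}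
    {d : Fin (k + 1) → ℕ} (h : ∀ b, (g b).natDegree ≤ d b)
    (hn : n + ∑ a : Fin (k + 1), (a : ℕ) = ∑ b, d b) {z : Fin n → ℂ}
    (hz : Function.Injective z) {c : ℂ} (hc : c ≠ 0)
    (hW : Wr g = Polynomial.C c * ∏ l, (Polynomial.X - Polynomial.C (z l)))
    {m : ℕ} (hm : m ≤ k + 1) (x : ℂ) :
    (betheOperator m x z).charpoly.IsRoot (-(-1) ^ m * (wronskianTail g m).eval x / c) := by
  refine charpoly_betheOperator_isRoot_of_recursion hz hc (k := k + 1) (A := wronskianTail g)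
    ?_ ?_ (wronskianTail_eq_zero g) ?_ hm x
  · rw [wronskianTail_zero, hW]
  · intro m
    rw [wronskianTail]
    split_ifs
    · exact degree_wronskianCoeff_lt h hn _
    · simp
  · intro i
    refine wronskianTail_recursion g ?_ ?_
    · rw [hW, Polynomial.eval_mul, Polynomial.eval_prod,
        Finset.prod_eq_zero (mem_univ i) (by simp), mul_zero]
    · rw [hW, Polynomial.derivative_C_mul, Polynomial.derivative_prod_finset,
        Polynomial.eval_mul, Polynomial.eval_C, Polynomial.eval_finsetSum]
      refine mul_ne_zero hc ?_
      rw [Finset.sum_eq_single i]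
      · simp only [Polynomial.eval_prod, Polynomial.eval_sub,
          Polynomial.eval_X, Polynomial.eval_C, Polynomial.derivative_sub,
          Polynomial.derivative_X, Polynomial.derivative_C, sub_zero, mul_one]
        exact Finset.prod_ne_zero_iff.2 fun l hl =>
          sub_ne_zero.2 fun he => Finset.ne_of_mem_erase hl (hz he).symm
      · intro j _ hj
        rw [Polynomial.eval_mul, Polynomial.eval_prod,
          Finset.prod_eq_zero (Finset.mem_erase.2 ⟨hj.symm, mem_univ i⟩) (by simp), zero_mul]
      · simp

theorem exists_common_root_of_not_separable {p : Polynomial ℂ} (h : ¬ p.Separable) :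
    ∃ z, p.eval z = 0 ∧ (Polynomial.derivative p).eval z = 0 := by
  rw [Polynomial.Separable, Polynomial.isCoprime_iff_aeval_ne_zero_of_isAlgClosed ℂ ℂ] at h
  push Not at h
  simpa using h

theorem finite_setOf_not_separable {U : Polynomial ℂ} (hU : U.Separable) (W : Polynomial ℂ) :
    {c : ℂ | ¬ (W + Polynomial.C c * U).Separable}.Finite := by
  set R := Polynomial.derivative W * U - W * Polynomial.derivative U with hR
  by_cases h0 : R = 0
  · have hdvd : U ∣ W := by
      refine hU.dvd_of_dvd_mul_right ?_
      rw [← sub_eq_zero.1 h0]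
      exact dvd_mul_left _ _
    obtain ⟨q, rfl⟩ := hdvd
    have hq : Polynomial.derivative q * (U * U) = 0 := by
      rw [← h0, hR, Polynomial.derivative_mul]
      ring
    have hU0 : U ≠ 0 := hU.ne_zero
    have hq' : Polynomial.derivative q = 0 :=
      (mul_eq_zero.1 hq).resolve_right (mul_ne_zero hU0 hU0)
    obtain ⟨a, rfl⟩ : ∃ a, q = Polynomial.C a :=
      ⟨_, Polynomial.eq_C_of_derivative_eq_zero hq'⟩
    refine (Set.finite_singleton (-a)).subset fun c hc => ?_
    by_contra hne
    refine hc ?_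
    have hac : a + c ≠ 0 := fun h => hne (by
      rw [Set.mem_singleton_iff]
      linear_combination h)
    have : U * Polynomial.C a + Polynomial.C c * U = Polynomial.C (a + c) * U := by
      rw [map_add]
      ring
    rw [this]
    exact hU.unit_mul (Polynomial.isUnit_C.2 hac.isUnit)
  · refine (R.roots.toFinset.image fun z => if U.eval z = 0 then
      -(Polynomial.derivative W).eval z / (Polynomial.derivative U).eval z else
      -W.eval z / U.eval z).finite_toSet.subset fun c hc => ?_
    obtain ⟨z, h1, h2⟩ := exists_common_root_of_not_separable hc
    simp only [Polynomial.derivative_add, Polynomial.derivative_C_mul, Polynomial.eval_add,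
      Polynomial.eval_mul, Polynomial.eval_C] at h1 h2
    rw [Finset.mem_coe, Finset.mem_image]
    refine ⟨z, ?_, ?_⟩
    · rw [Multiset.mem_toFinset, Polynomial.mem_roots h0, Polynomial.IsRoot, hR]
      simp only [Polynomial.eval_sub, Polynomial.eval_mul]
      linear_combination U.eval z * h2 - (Polynomial.derivative U).eval z * h1
    · split_ifs with hz
      · have hz' : (Polynomial.derivative U).eval z ≠ 0 := by
          intro h
          obtain ⟨a, b, hab⟩ := hU
          have := congrArg (Polynomial.eval z) hab
          simp [hz, h] at this
        rw [div_eq_iff hz']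
        linear_combination -h2
      · rw [div_eq_iff hz]
        linear_combination -h1

theorem Wr_cons_add_C {k : ℕ} (p : Polynomial ℂ) (c : ℂ) (h : Fin k → Polynomial ℂ) :
    Wr (Fin.cons (p + Polynomial.C c) h : Fin (k + 1) → Polynomial ℂ) =
      Wr (Fin.cons p h : Fin (k + 1) → Polynomial ℂ) +
        Polynomial.C c * Wr (fun b => Polynomial.derivative (h b)) := by
  simp only [Wr]
  rw [Matrix.det_succ_column_zero, Matrix.det_succ_column_zero, Fin.sum_univ_succ,
    Fin.sum_univ_succ]
  have hsub : ∀ (q : Polynomial ℂ) (i : Fin (k + 1)), (Matrix.of fun i j : Fin (k + 1) =>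
      Polynomial.derivative^[(i : ℕ)] ((Fin.cons q h : Fin (k + 1) → Polynomial ℂ) j)).submatrix
        i.succAbove Fin.succ =
      Matrix.of fun a b : Fin k => Polynomial.derivative^[(i.succAbove a : ℕ)] (h b) := by
    intro q i
    ext a b : 2
    simp
  simp only [hsub]
  have hc : ∀ i : Fin k, Polynomial.derivative^[(i : ℕ) + 1] (p + Polynomial.C c) =
      Polynomial.derivative^[(i : ℕ) + 1] p := by
    intro i
    rw [Function.iterate_succ_apply, Function.iterate_succ_apply, map_add,
      Polynomial.derivative_C, add_zero]
  simp only [Matrix.of_apply, Fin.cons_zero, Fin.val_succ, hc, Fin.val_zero, pow_zero, one_mul,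
    Function.iterate_zero, id, Fin.zero_succAbove, Function.iterate_succ_apply]
  ring

/-- Arbitrarily small perturbations make a Wronskian separable. -/
theorem exists_perturbation_separable {k : ℕ} (f : Fin k → Polynomial ℂ) {δ : ℝ} (hδ : 0 < δ) :
    ∃ ε : Fin k → ℂ, (∀ b, ‖ε b‖ < δ) ∧
      (Wr fun b => f b + Polynomial.C (ε b) * Polynomial.X ^ (b : ℕ)).Separable := by
  induction k with
  | zero => exact ⟨fun b => b.elim0, fun b => b.elim0, by simp [Wr, Polynomial.separable_one]⟩
  | succ k ih =>
    obtain ⟨ε, hε, hsep⟩ := ih fun b => Polynomial.derivative (f b.succ)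
    set h : Fin k → Polynomial ℂ := fun b => f b.succ +
      Polynomial.C (ε b / ((b : ℕ) + 1 : ℂ)) * Polynomial.X ^ ((b : ℕ) + 1) with hh
    have hh' : (fun b => Polynomial.derivative (h b)) = fun b =>
        Polynomial.derivative (f b.succ) + Polynomial.C (ε b) * Polynomial.X ^ (b : ℕ) := by
      ext1 b
      have hb : ((b : ℕ) + 1 : ℂ) ≠ 0 := Nat.cast_add_one_ne_zero _
      rw [hh, Polynomial.derivative_add, Polynomial.derivative_C_mul,
        Polynomial.derivative_X_pow, ← mul_assoc, ← Polynomial.C_mul]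
      congr 3
      push_cast
      field_simp
    rw [← hh'] at hsep
    have hfin := finite_setOf_not_separable hsep
      (Wr (Fin.cons (f 0) h : Fin (k + 1) → Polynomial ℂ))
    have hinf : (Metric.ball (0 : ℂ) δ).Infinite :=
      infinite_of_mem_nhds 0 (Metric.ball_mem_nhds _ hδ)
    obtain ⟨c, hc, hcs⟩ := (hinf.sdiff hfin).nonempty
    rw [Set.mem_ofPred_eq, not_not, ← Wr_cons_add_C] at hcs
    refine ⟨Fin.cons c fun b => ε b / ((b : ℕ) + 1 : ℂ), ?_, ?_⟩
    · refine Fin.cases ?_ fun b => ?_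
      · simpa using hc
      · rw [Fin.cons_succ, norm_div]
        refine (div_le_self (norm_nonneg _) ?_).trans_lt (hε b)
        rw [← Nat.cast_add_one, Complex.norm_natCast]
        simp
    · convert hcs using 2
      ext1 b
      refine Fin.cases ?_ (fun b => ?_) b
      · simp
      · simp [hh]

theorem continuous_coeff_prod {Y ι : Type*} [TopologicalSpace Y] (s : Finset ι)
    {P : ι → Y → Polynomial ℂ} (hP : ∀ i N, Continuous fun y => (P i y).coeff N) (N : ℕ) :
    Continuous fun y => (∏ i ∈ s, P i y).coeff N := by
  classical
  induction s using Finset.induction_on generalizing N with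
  | empty => simpa using continuous_const
  | insert a s ha ih =>
    simp only [Finset.prod_insert ha, Polynomial.coeff_mul]
    exact continuous_finsetSum _ fun q _ => (hP a _).mul (ih _)

theorem continuous_coeff_det {Y : Type*} [TopologicalSpace Y] {k : ℕ}
    {M : Y → Matrix (Fin k) (Fin k) (Polynomial ℂ)}
    (hM : ∀ i j N, Continuous fun y => (M y i j).coeff N) (N : ℕ) :
    Continuous fun y => (M y).det.coeff N := by
  simp only [Matrix.det_apply, Polynomial.finsetSum_coeff, Polynomial.coeff_smul]
  exact continuous_finsetSum _ fun σ _ =>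
    (continuous_coeff_prod univ (fun i N => hM (σ i) i N) N).const_smul _

/-- The perturbation of a family of polynomials by multiples of monomials. -/
noncomputable def perturbation {k : ℕ} (g : Fin k → Polynomial ℂ) (ε : Fin k → ℂ) :
    Fin k → Polynomial ℂ :=
  fun b => g b + Polynomial.C (ε b) * Polynomial.X ^ (b : ℕ)

theorem perturbation_zero {k : ℕ} (g : Fin k → Polynomial ℂ) : perturbation g 0 = g := by
  ext1 b
  simp [perturbation]

theorem iterate_derivative_perturbation {k : ℕ} (g : Fin k → Polynomial ℂ) (ε : Fin k → ℂ)
    (b : Fin k) (i : ℕ) : Polynomial.derivative^[i] (perturbation g ε b) =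
      Polynomial.derivative^[i] (g b) +
        Polynomial.C (ε b) * Polynomial.derivative^[i] (Polynomial.X ^ (b : ℕ)) := by
  rw [perturbation, iterate_map_add, Polynomial.iterate_derivative_C_mul]

theorem continuous_coeff_Wr_perturbation {k : ℕ} (g : Fin k → Polynomial ℂ) (N : ℕ) :
    Continuous fun ε => (Wr (perturbation g ε)).coeff N := by
  refine continuous_coeff_det (fun i j N => ?_) N
  simp only [Matrix.of_apply, iterate_derivative_perturbation, Polynomial.coeff_add,
    Polynomial.coeff_C_mul]
  fun_prop

theorem continuous_eval_det_perturbation {k : ℕ} (g : Fin k → Polynomial ℂ) (e : Fin k → ℕ)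
    (x : ℂ) : Continuous fun ε => (Matrix.det (Matrix.of fun a b : Fin k =>
      Polynomial.derivative^[e a] (perturbation g ε b))).eval x := by
  simp only [← Polynomial.coe_evalRingHom, RingHom.map_det]
  refine Continuous.matrix_det (continuous_matrix fun i j => ?_)
  simp only [RingHom.mapMatrix_apply, Matrix.map_apply, Matrix.of_apply,
    iterate_derivative_perturbation, Polynomial.coe_evalRingHom, Polynomial.eval_add,
    Polynomial.eval_mul, Polynomial.eval_C]
  fun_prop

theorem continuous_eval_wronskianTail_perturbation {k : ℕ} (g : Fin (k + 1) → Polynomial ℂ)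
    (m : ℕ) (x : ℂ) : Continuous fun ε => (wronskianTail (perturbation g ε) m).eval x := by
  simp only [wronskianTail]
  split_ifs
  · simp only [wronskianCoeff, Polynomial.eval_mul]
    exact continuous_const.mul (continuous_eval_det_perturbation g _ x)
  · simpa using continuous_const

theorem natDegree_perturbation_le {k : ℕ} {g : Fin k → Polynomial ℂ} {d : Fin k → ℕ}
    (h : ∀ b, (g b).natDegree ≤ d b) (hd : ∀ b : Fin k, (b : ℕ) ≤ d b) (ε : Fin k → ℂ) (b : Fin k) :
    (perturbation g ε b).natDegree ≤ d b :=
  Polynomial.natDegree_add_le_of_degree_le (h b)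
    ((Polynomial.natDegree_C_mul_X_pow_le _ _).trans (hd b))

theorem exists_injective_roots {p : Polynomial ℂ} (hp : p.Separable) {n : ℕ}
    (hn : p.natDegree ≤ n) (hc : p.coeff n ≠ 0) :
    ∃ z : Fin n → ℂ, Function.Injective z ∧
      p = Polynomial.C (p.coeff n) * ∏ l, (Polynomial.X - Polynomial.C (z l)) := by
  obtain rfl : p.natDegree = n := le_antisymm hn (Polynomial.le_natDegree_of_ne_zero hc)
  have hcard : p.roots.toFinset.card = p.natDegree := by
    rw [Multiset.toFinset_card_of_nodup (Polynomial.nodup_roots hp),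
      IsAlgClosed.card_roots_eq_natDegree]
  set e := (Finset.equivFinOfCardEq hcard).symm with he
  refine ⟨fun l => e l, Subtype.val_injective.comp e.injective, ?_⟩
  have h := Polynomial.C_leadingCoeff_mul_prod_multiset_X_sub_C
    (IsAlgClosed.card_roots_eq_natDegree (p := p))
  nth_rw 1 [← h]
  congr 1
  rw [Equiv.prod_comp e fun r : p.roots.toFinset => Polynomial.X - Polynomial.C (r : ℂ),
    Finset.prod_coe_sort p.roots.toFinset fun r : ℂ => Polynomial.X - Polynomial.C r,
    Finset.prod_multiset_map_count]
  refine Finset.prod_congr rfl fun r hr => ?_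
  rw [Multiset.count_eq_one_of_mem (Polynomial.nodup_roots hp) (Multiset.mem_toFinset.1 hr),
    pow_one]

theorem le_of_strictMono_fin {k : ℕ} {d : Fin k → ℕ} (hd : StrictMono d) (b : Fin k) :
    (b : ℕ) ≤ d b := by
  obtain ⟨b, hb⟩ := b
  induction b with
  | zero => simp
  | succ b ih => exact (ih (by omega)).trans_lt (hd (Fin.mk_lt_mk.2 b.lt_succ_self))

/-- The roots of polynomials with convergent coefficients and nonvanishing limit of the top
coefficients are bounded. -/
theorem exists_bound_roots {p : ℕ → Polynomial ℂ} {q : Polynomial ℂ} {n : ℕ}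
    (hp : ∀ t, (p t).natDegree ≤ n) (hc : ∀ t, (p t).coeff n ≠ 0) (hq : q.coeff n ≠ 0)
    (hlim : ∀ N, Filter.Tendsto (fun t => (p t).coeff N) Filter.atTop (nhds (q.coeff N))) :
    ∃ K : ℝ, ∀ t z, (p t).IsRoot z → ‖z‖ ≤ K := by
  have hlim' : Filter.Tendsto (fun t => ((range n).sup fun i => ‖(p t).coeff i‖₊) /
      ‖(p t).coeff n‖₊ + 1) Filter.atTop
      (nhds (((range n).sup fun i => ‖q.coeff i‖₊) / ‖q.coeff n‖₊ + 1)) := by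
    refine (Filter.Tendsto.div ?_ (hlim n).nnnorm (by simpa using hq)).add_const 1
    have := Filter.Tendsto.finset_sup_nhds (s := range n) (f := fun i t => ‖(p t).coeff i‖₊)
      (g := fun i => ‖q.coeff i‖₊) fun i _ => (hlim i).nnnorm
    convert this using 1
    ext1 t
    simp
  obtain ⟨K, hK⟩ := hlim'.bddAbove_range
  refine ⟨K, fun t z hz => ?_⟩
  have hn : (p t).natDegree = n :=
    le_antisymm (hp t) (Polynomial.le_natDegree_of_ne_zero (hc t))
  have h0 : p t ≠ 0 := fun h => hc t (by simp [h])
  have h1 := hz.norm_lt_cauchyBound h0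
  rw [Polynomial.cauchyBound, Polynomial.leadingCoeff, hn] at h1
  exact_mod_cast h1.le.trans (hK ⟨t, rfl⟩)

theorem exists_roots_Wr {k : ℕ} {g : Fin (k + 1) → Polynomial ℂ} (hg : ∀ b, g b ≠ 0)
    (hd : StrictMono fun b => (g b).natDegree) :
    ∃ (n : ℕ) (z : Fin n → ℂ) (c : ℂ), c ≠ 0 ∧
      Wr g = Polynomial.C c * ∏ l, (Polynomial.X - Polynomial.C (z l)) ∧
      ∀ m ≤ k + 1, ∀ x, (betheOperator m x z).charpoly.IsRoot
        (-(-1) ^ m * (wronskianTail g m).eval x / c) := by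
  set d : Fin (k + 1) → ℕ := fun b => (g b).natDegree with hd_def
  have hbd := le_of_strictMono_fin hd
  obtain ⟨n, hn⟩ : ∃ n, n + ∑ a : Fin (k + 1), (a : ℕ) = ∑ b, d b :=
    ⟨_, Nat.sub_add_cancel (Finset.sum_le_sum fun b _ => hbd b)⟩
  have hpd : ∀ ε b, (perturbation g ε b).natDegree ≤ d b :=
    natDegree_perturbation_le (fun b => le_rfl) hbd
  have hc : (Wr g).coeff n ≠ 0 := by
    rw [coeff_Wr (fun b => le_rfl) hn]
    exact mul_ne_zero (wronskianLeadFactor_ne_zero hd.injective)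
      (Finset.prod_ne_zero_iff.2 fun b _ => Polynomial.leadingCoeff_ne_zero.2 (hg b))
  have hcont := continuous_coeff_Wr_perturbation g
  obtain ⟨δ, hδ, hδc⟩ : ∃ δ > 0, ∀ ε : Fin (k + 1) → ℂ, ‖ε‖ < δ →
      (Wr (perturbation g ε)).coeff n ≠ 0 := by
    have h := (hcont n).continuousAt.eventually_ne (x := 0) (y := 0)
      (by rwa [perturbation_zero])
    obtain ⟨δ, hδ, h⟩ := Metric.eventually_nhds_iff.1 h
    exact ⟨δ, hδ, fun ε hε => h (by simpa using hε)⟩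
  have hex : ∀ t : ℕ, ∃ ε : Fin (k + 1) → ℂ, ‖ε‖ < min δ (1 / ((t : ℝ) + 1)) ∧
      (Wr (perturbation g ε)).Separable := by
    intro t
    have hpos : 0 < min δ (1 / ((t : ℝ) + 1)) := lt_min hδ (by positivity)
    obtain ⟨ε, h1, h2⟩ := exists_perturbation_separable g hpos
    exact ⟨ε, (pi_norm_lt_iff hpos).2 h1, h2⟩
  choose ε hε hsep using hex
  have hε0 : Filter.Tendsto ε Filter.atTop (nhds 0) :=
    squeeze_zero_norm (fun t => ((hε t).trans_le (min_le_right _ _)).le)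
      tendsto_one_div_add_atTop_nhds_zero_nat
  have hεc : ∀ t, (Wr (perturbation g (ε t))).coeff n ≠ 0 :=
    fun t => hδc _ ((hε t).trans_le (min_le_left _ _))
  have hdeg : ∀ t, (Wr (perturbation g (ε t))).natDegree ≤ n :=
    fun t => natDegree_Wr_le (hpd _) hn
  have hlim : ∀ N, Filter.Tendsto (fun t => (Wr (perturbation g (ε t))).coeff N) Filter.atTop
      (nhds ((Wr g).coeff N)) := by
    intro N
    have := ((hcont N).tendsto 0).comp hε0
    rwa [perturbation_zero] at this
  choose z hzinj hz using fun t => exists_injective_roots (hsep t) (hdeg t) (hεc t)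
  obtain ⟨K, hK⟩ := exists_bound_roots hdeg hεc hc hlim
  have hbound : ∀ t, z t ∈ Metric.closedBall (0 : Fin n → ℂ) (max K 0) := by
    intro t
    rw [mem_closedBall_zero_iff, pi_norm_le_iff_of_nonneg (le_max_right _ _)]
    refine fun l => (hK t _ ?_).trans (le_max_left _ _)
    rw [hz t, Polynomial.IsRoot, Polynomial.eval_mul, Polynomial.eval_prod,
      Finset.prod_eq_zero (mem_univ l) (by simp), mul_zero]
  obtain ⟨w, -, φ, hφ, hw⟩ := tendsto_subseq_of_bounded Metric.isBounded_closedBall hbound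
  have hεφ : Filter.Tendsto (ε ∘ φ) Filter.atTop (nhds 0) := hε0.comp hφ.tendsto_atTop
  have hcφ := (hlim n).comp hφ.tendsto_atTop
  refine ⟨n, w, (Wr g).coeff n, hc, ?_, fun m hm x => ?_⟩
  · refine Polynomial.funext fun x => ?_
    have h1 := ((continuous_eval_det_perturbation g (fun a => (a : ℕ)) x).tendsto 0).comp hεφ
    rw [perturbation_zero] at h1
    refine tendsto_nhds_unique h1 ?_
    have h2 : Filter.Tendsto (fun t => (Wr (perturbation g (ε (φ t)))).coeff n *
        ∏ l, (x - z (φ t) l)) Filter.atTop (nhds ((Wr g).coeff n * ∏ l, (x - w l))) :=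
      hcφ.mul (tendsto_finsetProd _ fun l _ =>
        tendsto_const_nhds.sub ((continuous_apply l).tendsto w |>.comp hw))
    convert h2 using 1
    · ext1 t
      have := congrArg (Polynomial.eval x) (hz (φ t))
      rw [Polynomial.eval_mul, Polynomial.eval_prod] at this
      simpa [Wr] using this
    · simp [Polynomial.eval_prod]
  · have h1 := ((continuous_eval_wronskianTail_perturbation g m x).tendsto 0).comp hεφ
    rw [perturbation_zero] at h1
    have h2 := ((continuous_eval_charpoly_betheOperator (n := n) m x).tendsto _).comp
      (((h1.const_mul (-(-1) ^ m)).div hcφ hc).prodMk_nhds hw)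
    refine tendsto_nhds_unique h2 ?_
    refine tendsto_const_nhds.congr fun t => ?_
    exact (charpoly_betheOperator_isRoot_of_Wr_eq (hpd _) hn (hzinj _) (hεc _) (hz _) hm x).symm

theorem map_conj_eq_self_of_eval_real {p : Polynomial ℂ} (h : ∀ x : ℝ, (p.eval (x : ℂ)).im = 0) :
    p.map (starRingEnd ℂ) = p := by
  refine Polynomial.eq_of_infinite_eval_eq _ _
    ((Set.infinite_range_of_injective Complex.ofReal_injective).mono ?_)
  rintro _ ⟨x, rfl⟩
  have hx := Polynomial.eval_map_apply (p := p) (starRingEnd ℂ) (x : ℂ)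
  rw [Complex.conj_ofReal, Complex.conj_eq_iff_im.2 (h x)] at hx
  exact hx

theorem exists_real_wronskianCoeff {k : ℕ} {g : Fin (k + 1) → Polynomial ℂ} (hg : ∀ b, g b ≠ 0)
    (hd : StrictMono fun b => (g b).natDegree) (hreal : ∀ z, (Wr g).IsRoot z → z.im = 0) :
    ∃ c : ℂ, c ≠ 0 ∧ ∀ j, (Polynomial.C c * wronskianCoeff g j).map (starRingEnd ℂ) =
      Polynomial.C c * wronskianCoeff g j := by
  obtain ⟨n, z, c, hc, hW, hroot⟩ := exists_roots_Wr hg hd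
  have hz : ∀ l, (z l).im = 0 := by
    intro l
    refine hreal _ ?_
    rw [hW, Polynomial.IsRoot, Polynomial.eval_mul, Polynomial.eval_prod,
      Finset.prod_eq_zero (mem_univ l) (by simp), mul_zero]
  have htail : ∀ m ≤ k + 1, (Polynomial.C c⁻¹ * wronskianTail g m).map (starRingEnd ℂ) =
      Polynomial.C c⁻¹ * wronskianTail g m := by
    intro m hm
    refine map_conj_eq_self_of_eval_real fun x => ?_
    have h := im_eq_zero_of_charpoly_isRoot
      (isHermitian_betheOperator m (Complex.ofReal_im x) hz) (hroot m hm x)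
    have he : (Polynomial.C c⁻¹ * wronskianTail g m).eval (x : ℂ) =
        (wronskianTail g m).eval (x : ℂ) / c := by
      rw [Polynomial.eval_mul, Polynomial.eval_C]
      field_simp
    rw [he]
    rw [mul_div_assoc] at h
    rcases neg_one_pow_eq_or ℂ m with hs | hs <;> simpa [hs] using h
  refine ⟨c⁻¹, inv_ne_zero hc, fun j => ?_⟩
  refine Fin.lastCases ?_ (fun j => ?_) j
  · rw [wronskianCoeff_last, hW, ← mul_assoc, ← Polynomial.C_mul, inv_mul_cancel₀ hc,
      Polynomial.C_1, one_mul, Polynomial.map_prod]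
    refine Finset.prod_congr rfl fun l _ => ?_
    rw [Polynomial.map_sub, Polynomial.map_X, Polynomial.map_C, Complex.conj_eq_iff_im.2 (hz l)]
  · have h := htail (Fin.rev j : Fin (k + 1)) (Fin.is_le _).step
    have hj : wronskianTail g (Fin.rev j : Fin (k + 1)) = wronskianCoeff g j.castSucc := by
      rw [wronskianTail, dif_pos (Fin.is_lt _), Fin.eta, Fin.rev_rev]
    rwa [hj] at h

theorem linearIndependent_of_Wr_ne_zero {k : ℕ} {g : Fin k → Polynomial ℂ} (h : Wr g ≠ 0) :
    LinearIndependent ℂ g := by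
  rw [Fintype.linearIndependent_iff]
  intro a ha b
  have h0 : (Matrix.of fun i j : Fin k => Polynomial.derivative^[(i : ℕ)] (g j)) *ᵥ
      (fun b => Polynomial.C (a b)) = 0 := by
    ext1 i
    have := congrArg Polynomial.derivative^[(i : ℕ)] ha
    rw [Polynomial.iterate_derivative_sum, Polynomial.iterate_derivative_zero] at this
    simp only [Polynomial.iterate_derivative_smul] at this
    simpa [Matrix.mulVec, dotProduct, Polynomial.smul_eq_C_mul, mul_comm] using this
  simpa using congrFun (Matrix.eq_zero_of_mulVec_eq_zero h h0) b

theorem Wr_ne_zero_of_strictMono {k : ℕ} {g : Fin k → Polynomial ℂ} (hg : ∀ b, g b ≠ 0)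
    (hd : StrictMono fun b => (g b).natDegree) : Wr g ≠ 0 := by
  intro h0
  have h := coeff_Wr (g := g) (fun b => le_rfl) (Nat.sub_add_cancel
    (Finset.sum_le_sum fun b _ => le_of_strictMono_fin hd b))
  rw [h0, Polynomial.coeff_zero] at h
  exact mul_ne_zero (wronskianLeadFactor_ne_zero hd.injective)
    (Finset.prod_ne_zero_iff.2 fun b _ => Polynomial.leadingCoeff_ne_zero.2 (hg b)) h.symm

theorem Wr_dvd_of_mem_span {k : ℕ} {f g : Fin k → Polynomial ℂ}
    (h : ∀ b, f b ∈ Submodule.span ℂ (Set.range g)) : Wr g ∣ Wr f := by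
  choose A hA using fun b => Submodule.mem_span_range_iff_exists_fun ℂ |>.1 (h b)
  refine ⟨(Matrix.of fun a b => Polynomial.C (A b a)).det, ?_⟩
  rw [Wr, Wr, ← Matrix.det_mul]
  congr 1
  ext1 i b
  rw [Matrix.of_apply, ← hA b, Polynomial.iterate_derivative_sum, Matrix.mul_apply]
  refine Finset.sum_congr rfl fun a _ => ?_
  rw [Polynomial.iterate_derivative_smul, Polynomial.smul_eq_C_mul, mul_comm]
  rfl

/-- A space of polynomials of bounded degree has a basis with increasing degrees. -/
theorem exists_strictMono_natDegree_of_le_degreeLT (N : ℕ) {V : Submodule ℂ (Polynomial ℂ)}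
    (hV : V ≤ Polynomial.degreeLT ℂ N) :
    ∃ (k : ℕ) (g : Fin k → Polynomial ℂ), Submodule.span ℂ (Set.range g) = V ∧
      (∀ b, g b ≠ 0) ∧ StrictMono fun b => (g b).natDegree := by
  induction N generalizing V with
  | zero =>
    refine ⟨0, fun b => b.elim0, ?_, fun b => b.elim0, fun b => b.elim0⟩
    rw [Set.range_eq_empty, Submodule.span_empty, eq_comm, eq_bot_iff]
    intro p hp
    have := Polynomial.mem_degreeLT.1 (hV hp)
    simpa [Polynomial.degree_eq_bot] using this
  | succ N ih =>
    by_cases hVN : V ≤ Polynomial.degreeLT ℂ N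
    · exact ih hVN
    obtain ⟨p, hp, hpN⟩ := Set.not_subset.1 hVN
    obtain ⟨k, g, hspan, hg, hd⟩ := ih (V := V ⊓ Polynomial.degreeLT ℂ N) inf_le_right
    have hlt : ∀ q ∈ V, q.natDegree ≤ N := by
      intro q hq
      by_cases hq0 : q = 0
      · simp [hq0]
      · exact Nat.lt_succ_iff.1 ((Polynomial.natDegree_lt_iff_degree_lt hq0).2
          (Polynomial.mem_degreeLT.1 (hV hq)))
    have hp0 : p ≠ 0 := by
      rintro rfl
      exact hpN (Submodule.zero_mem _)
    have hpdeg : p.natDegree = N := by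
      refine le_antisymm (hlt p hp) (not_lt.1 fun h => hpN ?_)
      exact Polynomial.mem_degreeLT.2 ((Polynomial.natDegree_lt_iff_degree_lt hp0).1 h)
    have hpc : p.coeff N ≠ 0 := by
      rw [← hpdeg]
      exact Polynomial.leadingCoeff_ne_zero.2 hp0
    have hgmem : ∀ b, g b ∈ V ⊓ Polynomial.degreeLT ℂ N := fun b =>
      hspan ▸ Submodule.subset_span ⟨b, rfl⟩
    have hgN : ∀ b, (g b).natDegree < N := fun b =>
      (Polynomial.natDegree_lt_iff_degree_lt (hg b)).2 (Polynomial.mem_degreeLT.1 (hgmem b).2)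
    refine ⟨k + 1, Fin.snoc g p, ?_, ?_, ?_⟩
    · rw [Fin.range_snoc, Submodule.span_insert, hspan]
      refine le_antisymm (sup_le ?_ inf_le_left) fun q hq => ?_
      · rwa [Submodule.span_singleton_le_iff_mem]
      · rw [Submodule.mem_sup]
        refine ⟨(q.coeff N / p.coeff N) • p, Submodule.smul_mem _ _
          (Submodule.mem_span_singleton_self p), q - (q.coeff N / p.coeff N) • p, ?_, by simp⟩
        have hmem := V.sub_mem hq (V.smul_mem (q.coeff N / p.coeff N) hp)
        refine ⟨hmem, Polynomial.mem_degreeLT.2 ((Polynomial.degree_lt_iff_coeff_zero _ _).2 ?_)⟩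
        intro i hi
        rcases hi.eq_or_lt with rfl | hi
        · simp [hpc]
        · exact Polynomial.coeff_eq_zero_of_natDegree_lt ((hlt _ hmem).trans_lt hi)
    · refine Fin.lastCases ?_ fun b => ?_
      · simpa using hp0
      · simpa using hg b
    · intro a b hab
      obtain ⟨a, rfl⟩ := Fin.exists_castSucc_eq.2 (hab.trans_le (Fin.le_last b)).ne
      revert hab
      refine Fin.lastCases ?_ (fun b hab => ?_) b
      · simpa [hpdeg] using hgN a
      · simpa using hd (Fin.castSucc_lt_castSucc_iff.1 hab)

theorem exists_strictMono_natDegree {k : ℕ} {f : Fin k → Polynomial ℂ}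
    (hf : LinearIndependent ℂ f) :
    ∃ g : Fin k → Polynomial ℂ, Submodule.span ℂ (Set.range g) = Submodule.span ℂ (Set.range f) ∧
      (∀ b, g b ≠ 0) ∧ StrictMono fun b => (g b).natDegree := by
  obtain ⟨k', g, hspan, hg, hd⟩ := exists_strictMono_natDegree_of_le_degreeLT
    (univ.sup (fun b => (f b).natDegree) + 1) (V := Submodule.span ℂ (Set.range f)) (by
      rw [Submodule.span_le]
      rintro _ ⟨b, rfl⟩
      refine Polynomial.mem_degreeLT.2 (Polynomial.degree_le_natDegree.trans_lt ?_)
      exact_mod_cast Nat.lt_succ_of_le (Finset.le_sup (f := fun b => (f b).natDegree) (mem_univ b)))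
  have hk : k' = k := by
    have h1 := finrank_span_eq_card hf
    have h2 := finrank_span_eq_card
      (linearIndependent_of_Wr_ne_zero (Wr_ne_zero_of_strictMono hg hd))
    rw [hspan, h1] at h2
    simpa using h2.symm
  subst hk
  exact ⟨g, hspan, hg, hd⟩

theorem Wr_ne_zero {k : ℕ} {f : Fin k → Polynomial ℂ} (hf : LinearIndependent ℂ f) :
    Wr f ≠ 0 := by
  obtain ⟨g, hspan, hg, hd⟩ := exists_strictMono_natDegree hf
  refine ne_zero_of_dvd_ne_zero (Wr_ne_zero_of_strictMono hg hd) (Wr_dvd_of_mem_span fun b => ?_)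
  rw [← hspan]
  exact Submodule.subset_span ⟨b, rfl⟩

theorem sum_wronskianCoeff_mul_eq_zero_of_mem_span {k : ℕ} {g : Fin k → Polynomial ℂ}
    {p : Polynomial ℂ} (hp : p ∈ Submodule.span ℂ (Set.range g)) :
    ∑ j, wronskianCoeff g j * Polynomial.derivative^[(j : ℕ)] p = 0 := by
  rw [← Wr_snoc]
  by_contra h
  exact ((linearIndependent_finSnoc.1 (linearIndependent_of_Wr_ne_zero h)).2 hp).elim

/-- **Theorem of Mukhin–Tarasov–Varchenko (the Shapiro Conjecture).**
If `f₁, …, f_k` are ℂ-linearly independent polynomials of degree at most `n - 1`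
and every complex root of their Wronskian is real, then the ℂ-linear span of the
`f i` is stable under coefficientwise complex conjugation (equivalently, it has a
basis of real polynomials). -/
theorem mukhin_tarasov_varchenko (k n : ℕ) (hk : 1 ≤ k) (hkn : k ≤ n)
    (f : Fin k → Polynomial ℂ) (hind : LinearIndependent ℂ f)
    (hdeg : ∀ i, (f i).degree ≤ (n - 1 : ℕ))
    (hreal : ∀ z : ℂ, (Wr f).IsRoot z → z.im = 0) :
    ∀ p ∈ Submodule.span ℂ (Set.range f),
      p.map (starRingEnd ℂ) ∈ Submodule.span ℂ (Set.range f) := by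
  obtain ⟨k, rfl⟩ := Nat.exists_eq_add_of_le' hk
  obtain ⟨g, hspan, hg, hd⟩ := exists_strictMono_natDegree hind
  have hdvd : Wr g ∣ Wr f := Wr_dvd_of_mem_span fun b =>
    hspan ▸ Submodule.subset_span ⟨b, rfl⟩
  obtain ⟨c, hc, hconj⟩ := exists_real_wronskianCoeff hg hd fun z hz => hreal z (hz.dvd hdvd)
  rw [← hspan]
  intro p hp
  by_contra hnot
  have hgind := linearIndependent_of_Wr_ne_zero (Wr_ne_zero_of_strictMono hg hd)
  refine Wr_ne_zero (linearIndependent_finSnoc.2 ⟨hgind, hnot⟩) ?_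
  have h : Polynomial.C c * Wr (Fin.snoc g (p.map (starRingEnd ℂ)) : Fin (k + 2) → _) =
      (Polynomial.C c * ∑ j, wronskianCoeff g j * Polynomial.derivative^[(j : ℕ)] p).map
        (starRingEnd ℂ) := by
    rw [Wr_snoc, Finset.mul_sum, Finset.mul_sum, Polynomial.map_sum]
    refine Finset.sum_congr rfl fun j _ => ?_
    rw [← mul_assoc, ← mul_assoc, Polynomial.map_mul, hconj, Polynomial.iterate_derivative_map]
  rw [sum_wronskianCoeff_mul_eq_zero_of_mem_span hp, mul_zero, Polynomial.map_zero] at h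
  exact (mul_eq_zero.1 h).resolve_left (by simpa using hc)
end

section
/- Let s₁ < s₂ < s₃ < s₄ be four distinct real numbers, let γ be the rational normal curve in ℂ⁴, and for each i let ℓ_i := F₂(s_i) = span_ℂ{γ(s_i), γ^{(1)}(s_i)}, the tangent plane to γ at γ(s_i). Then there are exactly two 2-dimensional ℂ-subspaces H of ℂ⁴ with H ∩ ℓ_i ≠ {0} for i = 1,2,3,4, and both of them are real. [The Shapiro Conjecture for the problem of four lines, proved in Example 1.] -/
/-- The `m`-th derivative of the rational normal curve `γ(t) = (1, t, t²/2!, …, t^{n-1}/(n-1)!)`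
in `ℂⁿ`, evaluated at `t`. -/
noncomputable def gammaVec (n m : ℕ) (t : ℂ) : Fin n → ℂ :=
  fun i => Polynomial.eval t
    (Polynomial.derivative^[m]
      (Polynomial.C ((Nat.factorial (i : ℕ) : ℂ))⁻¹ * Polynomial.X ^ (i : ℕ)))

/-- The `i`-dimensional subspace `F_i(t)` osculating the rational normal curve at `γ(t)`:
the span of `γ(t), γ'(t), …, γ^{(i-1)}(t)`. -/
noncomputable def oscFlag (n i : ℕ) (t : ℂ) : Submodule ℂ (Fin n → ℂ) :=
  Submodule.span ℂ (Set.range fun m : Fin i => gammaVec n (m : ℕ) t)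

/-- A ℂ-subspace of `ℂⁿ` is real if it is stable under coordinatewise complex conjugation. -/
def IsRealSubspace {n : ℕ} (H : Submodule ℂ (Fin n → ℂ)) : Prop :=
  ∀ v ∈ H, (fun j => (starRingEnd ℂ) (v j)) ∈ H

/-- The vector of `ℂ⁴` apolar to the cubic `(x - t)² L(x)`, where `L` is the affine function
with `L(c) = (d - c) u` and `L(d) = (d - c) w`. -/
noncomputable def tangentVec (c d t u w : ℂ) : Fin 4 → ℂ :=
  ![-6 * (w - u), 2 * (d * u - c * w - 2 * (w - u) * t),
    2 * (d * u - c * w) * t - (w - u) * t ^ 2, (d * u - c * w) * t ^ 2]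

theorem mem_oscFlag_iff (t : ℂ) (v : Fin 4 → ℂ) :
    v ∈ oscFlag 4 2 t ↔
      v 2 = t * v 1 - t ^ 2 / 2 * v 0 ∧ v 3 = t * v 2 - t ^ 2 / 2 * v 1 + t ^ 3 / 6 * v 0 := by
  have hγ : gammaVec 4 0 t = ![1, t, t ^ 2 / 2, t ^ 3 / 6] := by
    ext i
    fin_cases i <;> simp [gammaVec, Nat.factorial] <;> ring
  have hγ' : gammaVec 4 1 t = ![0, 1, t, t ^ 2 / 2] := by
    ext i
    fin_cases i <;> simp [gammaVec, Nat.factorial] <;> ring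
  have hspan : oscFlag 4 2 t = Submodule.span ℂ {gammaVec 4 0 t, gammaVec 4 1 t} := by
    unfold oscFlag
    congr 1
    ext x
    simp [Fin.exists_fin_two, eq_comm]
  rw [hspan, Submodule.mem_span_pair, hγ, hγ']
  constructor
  · rintro ⟨x, y, rfl⟩
    simp
    constructor <;> ring
  · rintro ⟨h2, h3⟩
    refine ⟨v 0, v 1 - t * v 0, ?_⟩
    ext i
    fin_cases i
    · simp
    · simp; ring
    · simp [h2]; ring
    · simp [h3, h2]; ring

theorem tangentVec_mem (c d t u w : ℂ) : tangentVec c d t u w ∈ oscFlag 4 2 t := by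
  rw [mem_oscFlag_iff]
  simp [tangentVec]
  constructor <;> ring

theorem exists_eq_tangentVec {c d t : ℂ} (hcd : c ≠ d) {v : Fin 4 → ℂ}
    (hv : v ∈ oscFlag 4 2 t) : ∃ u w, v = tangentVec c d t u w := by
  obtain ⟨h2, h3⟩ := (mem_oscFlag_iff t v).1 hv
  have hdc : d - c ≠ 0 := sub_ne_zero.2 hcd.symm
  refine ⟨(v 1 / 2 - v 0 / 6 * (2 * t + c)) / (d - c),
    (v 1 / 2 - v 0 / 6 * (2 * t + d)) / (d - c), ?_⟩
  ext i
  fin_cases i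
  · simp [tangentVec]; field_simp; ring
  · simp [tangentVec]; field_simp; ring
  · simp [tangentVec, h2]; field_simp; ring
  · simp [tangentVec, h3, h2]; field_simp; ring

theorem smul_tangentVec (c d t k u w : ℂ) :
    k • tangentVec c d t u w = tangentVec c d t (k * u) (k * w) := by
  ext i
  fin_cases i <;> simp [tangentVec] <;> ring

theorem tangentVec_injective {c d t u w u' w' : ℂ} (hcd : c ≠ d)
    (h : tangentVec c d t u w = tangentVec c d t u' w') : u = u' ∧ w = w' := by
  have hdc : d - c ≠ 0 := sub_ne_zero.2 hcd.symm
  have h0 := congrFun h 0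
  have h1 := congrFun h 1
  simp [tangentVec] at h0 h1
  constructor
  · apply mul_left_cancel₀ hdc
    grind
  · apply mul_left_cancel₀ hdc
    grind

theorem tangentVec_zero (c d t : ℂ) : tangentVec c d t 0 0 = 0 := by
  ext i
  fin_cases i <;> simp [tangentVec]

theorem oscFlag_disjoint {a b : ℂ} (hab : a ≠ b) :
    Disjoint (oscFlag 4 2 a) (oscFlag 4 2 b) := by
  rw [Submodule.disjoint_def]
  intro v hva hvb
  obtain ⟨h2, h3⟩ := (mem_oscFlag_iff a v).1 hva
  obtain ⟨k2, k3⟩ := (mem_oscFlag_iff b v).1 hvb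
  have hba : b - a ≠ 0 := sub_ne_zero.2 hab.symm
  have e1 : v 1 = (a + b) / 2 * v 0 := by
    apply mul_left_cancel₀ hba
    linear_combination h2 - k2
  have e0 : v 0 = 0 := by
    have : (b - a) ^ 3 * v 0 = 0 := by grind
    simpa [hba] using this
  ext i
  fin_cases i <;> simp_all

theorem add_tangentVec_mem_left {a b c d : ℂ} (hcd : c ≠ d) (u w u' w' : ℂ) :
    tangentVec c d a u w + tangentVec c d b u' w' ∈ oscFlag 4 2 c ↔
      (c - a) ^ 2 * u + (c - b) ^ 2 * u' = 0 ∧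
      2 * (d - c) * ((c - a) * u + (c - b) * u') +
        (c - a) ^ 2 * (w - u) + (c - b) ^ 2 * (w' - u') = 0 := by
  have hdc : d - c ≠ 0 := sub_ne_zero.2 hcd.symm
  rw [mem_oscFlag_iff]
  simp [tangentVec]
  constructor
  · rintro ⟨h1, h2⟩
    constructor
    · apply mul_left_cancel₀ hdc
      grind
    · grind
  · rintro ⟨h1, h2⟩
    constructor <;> grind

theorem add_tangentVec_mem_right {a b c d : ℂ} (hcd : c ≠ d) (u w u' w' : ℂ) :
    tangentVec c d a u w + tangentVec c d b u' w' ∈ oscFlag 4 2 d ↔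
      (d - a) ^ 2 * w + (d - b) ^ 2 * w' = 0 ∧
      2 * (d - c) * ((d - a) * w + (d - b) * w') +
        (d - a) ^ 2 * (w - u) + (d - b) ^ 2 * (w' - u') = 0 := by
  have hdc : d - c ≠ 0 := sub_ne_zero.2 hcd.symm
  rw [mem_oscFlag_iff]
  simp [tangentVec]
  constructor
  · rintro ⟨h1, h2⟩
    constructor
    · apply mul_left_cancel₀ hdc
      grind
    · grind
  · rintro ⟨h1, h2⟩
    constructor <;> grind

theorem tangentVec_ne_zero {c d t u w : ℂ} (hcd : c ≠ d) (h : u ≠ 0 ∨ w ≠ 0) :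
    tangentVec c d t u w ≠ 0 := by
  rw [← tangentVec_zero c d t]
  intro h0
  obtain ⟨rfl, rfl⟩ := tangentVec_injective hcd h0
  simp at h

theorem linearIndependent_pair_of_disjoint {V : Type*} [AddCommGroup V] [Module ℂ V]
    {E F : Submodule ℂ V} (hEF : Disjoint E F) {p q : V}
    (hp0 : p ≠ 0) (hq0 : q ≠ 0) (hpE : p ∈ E) (hqF : q ∈ F) :
    LinearIndependent ℂ ![p, q] := by
  rw [LinearIndependent.pair_iff]
  intro x y h
  have hx : x • p = 0 := by
    refine Submodule.disjoint_def.1 hEF _ (E.smul_mem x hpE) ?_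
    rw [eq_neg_of_add_eq_zero_left h]
    exact F.neg_mem (F.smul_mem y hqF)
  have hy : y • q = 0 := by rwa [hx, zero_add] at h
  exact ⟨(smul_eq_zero.1 hx).resolve_right hp0, (smul_eq_zero.1 hy).resolve_right hq0⟩

theorem finrank_span_pair {V : Type*} [AddCommGroup V] [Module ℂ V] {p q : V}
    (h : LinearIndependent ℂ ![p, q]) : Module.finrank ℂ (Submodule.span ℂ {p, q}) = 2 := by
  have := finrank_span_eq_card h
  rwa [Matrix.range_cons_cons_empty, Fintype.card_fin] at this

/-- A plane meeting two disjoint subspaces in nonzero vectors `p`, `q` is spanned by them. -/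
theorem eq_span_pair_of_disjoint {V : Type*} [AddCommGroup V] [Module ℂ V]
    {E F H : Submodule ℂ V} (hEF : Disjoint E F) (hH : Module.finrank ℂ H = 2) {p q : V}
    (hp0 : p ≠ 0) (hq0 : q ≠ 0) (hpE : p ∈ E) (hqF : q ∈ F) (hpH : p ∈ H) (hqH : q ∈ H) :
    H = Submodule.span ℂ {p, q} := by
  have hli := linearIndependent_pair_of_disjoint hEF hp0 hq0 hpE hqF
  have : FiniteDimensional ℂ H := FiniteDimensional.of_finrank_pos (by omega)
  refine (Submodule.eq_of_le_of_finrank_eq (Submodule.span_le.2 ?_) ?_).symm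
  · rintro x (rfl | rfl) <;> assumption
  · rw [hH, finrank_span_pair hli]

/-- The plane attached to a parameter `n`; it meets the tangent planes at `a`, `b`, and, when `n`
is a root of the resolvent quadratic, those at `c`, `d`. -/
noncomputable def transversal (a b c d n : ℂ) : Submodule ℂ (Fin 4 → ℂ) :=
  Submodule.span ℂ
    {tangentVec c d a (c - b) (n * (d - b)), tangentVec c d b (n * (c - a)) (d - a)}

/-- The quadratic whose roots parametrize the planes meeting the tangent planes at
`a`, `b`, `c`, `d`. -/
def fourLinesQuad {R : Type*} [CommRing R] (a b c d n : R) : R :=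
  (c - a) * (d - b) * n ^ 2 - 2 * ((d - c) * (b - a)) * n - (c - b) * (d - a)

/-- Elimination step for the incidence equations: the ratio parameter `n` is a root of a
quadratic. -/
theorem elimination {α β δ ε g x y x' y' u w u' w' n : ℂ} (hα : α ≠ 0) (hβ : β ≠ 0) (hδ : δ ≠ 0)
    (hε : ε ≠ 0) (hg : g ≠ 0) (hx : x ≠ 0) (hy : y ≠ 0) (hx' : x' ≠ 0) (hy' : y' ≠ 0)
    (hu : u ≠ 0)
    (h1 : α ^ 2 * (x * u) + β ^ 2 * (y * u') = 0)
    (h2 : δ ^ 2 * (x' * w) + ε ^ 2 * (y' * w') = 0)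
    (h3 : β * (α ^ 2 * (x * w) + β ^ 2 * (y * w')) = 2 * g * α * (x * u))
    (h4 : ε * (δ ^ 2 * (x' * u) + ε ^ 2 * (y' * u')) = -(2 * g * δ * (x' * w)))
    (hn : n * (ε * u) = w * β) :
    α * ε * n ^ 2 - 2 * g * n - β * δ = 0 ∧ n * α * w' = δ * u' := by
  obtain ⟨m, rfl⟩ : ∃ m, y' = m * x' * y / x := ⟨y' * x / (x' * y), by field_simp⟩
  have hm : m ≠ 0 := by
    rintro rfl
    simp at hy'
  obtain rfl : w = n * ε * u / β := by field_simp; linear_combination -hn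
  obtain rfl : u' = -(α ^ 2 * x * u / (β ^ 2 * y)) := by field_simp; linear_combination h1
  obtain rfl : w' = -(δ ^ 2 * x * n * u / (ε * β * m * y)) := by
    field_simp at h2 ⊢
    apply mul_left_cancel₀ (mul_ne_zero hx' hε)
    linear_combination h2
  have k4 : α ^ 2 * ε ^ 2 * m - β ^ 2 * δ ^ 2 = 2 * g * δ * β * n := by
    field_simp at h4
    linear_combination -h4
  have k3 : n * (α ^ 2 * ε ^ 2 * m - β ^ 2 * δ ^ 2) = 2 * g * α * ε * m := by
    field_simp at h3
    linear_combination h3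
  have hmn : n ^ 2 * δ * β = α * ε * m := by
    apply mul_left_cancel₀ (mul_ne_zero two_ne_zero hg)
    rw [k4] at k3
    linear_combination k3
  constructor
  · apply mul_left_cancel₀ (mul_ne_zero hδ hβ)
    linear_combination k4 + α * ε * hmn
  · field_simp
    linear_combination -hmn

theorem finrank_transversal {a b c d : ℂ} (hab : a ≠ b) (had : a ≠ d) (hbc : b ≠ c)
    (hcd : c ≠ d) (n : ℂ) : Module.finrank ℂ (transversal a b c d n) = 2 :=
  finrank_span_pair <| linearIndependent_pair_of_disjoint (oscFlag_disjoint hab)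
    (tangentVec_ne_zero hcd (.inl (sub_ne_zero.2 hbc.symm)))
    (tangentVec_ne_zero hcd (.inr (sub_ne_zero.2 had.symm)))
    (tangentVec_mem _ _ _ _ _) (tangentVec_mem _ _ _ _ _)

theorem transversal_inf_oscFlag_ne_bot {a b c d n : ℂ} (hab : a ≠ b) (hac : a ≠ c) (had : a ≠ d)
    (hbc : b ≠ c) (hbd : b ≠ d) (hcd : c ≠ d) (hn : fourLinesQuad a b c d n = 0) :
    transversal a b c d n ⊓ oscFlag 4 2 a ≠ ⊥ ∧ transversal a b c d n ⊓ oscFlag 4 2 b ≠ ⊥ ∧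
    transversal a b c d n ⊓ oscFlag 4 2 c ≠ ⊥ ∧ transversal a b c d n ⊓ oscFlag 4 2 d ≠ ⊥ := by
  have hca : c - a ≠ 0 := sub_ne_zero.2 hac.symm
  have hcb : c - b ≠ 0 := sub_ne_zero.2 hbc.symm
  have hda : d - a ≠ 0 := sub_ne_zero.2 had.symm
  have hdb : d - b ≠ 0 := sub_ne_zero.2 hbd.symm
  have hp0 := tangentVec_ne_zero (t := a) (w := n * (d - b)) hcd (.inl hcb)
  have hq0 := tangentVec_ne_zero (t := b) (u := n * (c - a)) hcd (.inr hda)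
  have hpH : tangentVec c d a (c - b) (n * (d - b)) ∈ transversal a b c d n :=
    Submodule.subset_span (by simp)
  have hqH : tangentVec c d b (n * (c - a)) (d - a) ∈ transversal a b c d n :=
    Submodule.subset_span (by simp)
  have hli := LinearIndependent.pair_iff.1 <| linearIndependent_pair_of_disjoint
    (oscFlag_disjoint hab) hp0 hq0 (tangentVec_mem _ _ _ _ _) (tangentVec_mem _ _ _ _ _)
  unfold fourLinesQuad at hn
  refine ⟨?_, ?_, ?_, ?_⟩ <;> rw [Submodule.ne_bot_iff]
  · exact ⟨_, ⟨hpH, tangentVec_mem _ _ _ _ _⟩, hp0⟩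
  · exact ⟨_, ⟨hqH, tangentVec_mem _ _ _ _ _⟩, hq0⟩
  · refine ⟨(n * (c - b)) • _ + (-(c - a)) • _,
      ⟨add_mem (Submodule.smul_mem _ _ hpH) (Submodule.smul_mem _ _ hqH), ?_⟩,
      fun h => neg_ne_zero.2 hca (hli _ _ h).2⟩
    rw [SetLike.mem_coe, smul_tangentVec, smul_tangentVec, add_tangentVec_mem_left hcd]
    constructor
    · ring
    · linear_combination (c - a) * (c - b) * hn
  · refine ⟨(d - b) • _ + (-(n * (d - a))) • _,
      ⟨add_mem (Submodule.smul_mem _ _ hpH) (Submodule.smul_mem _ _ hqH), ?_⟩,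
      fun h => hdb (hli _ _ h).1⟩
    rw [SetLike.mem_coe, smul_tangentVec, smul_tangentVec, add_tangentVec_mem_right hcd]
    constructor
    · ring
    · linear_combination (d - a) * (d - b) * hn

theorem exists_eq_transversal {a b c d : ℂ} (hab : a ≠ b) (hac : a ≠ c) (had : a ≠ d)
    (hbc : b ≠ c) (hbd : b ≠ d) (hcd : c ≠ d) {H : Submodule ℂ (Fin 4 → ℂ)}
    (hH : Module.finrank ℂ H = 2)
    (ha : H ⊓ oscFlag 4 2 a ≠ ⊥) (hb : H ⊓ oscFlag 4 2 b ≠ ⊥)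
    (hc : H ⊓ oscFlag 4 2 c ≠ ⊥) (hd : H ⊓ oscFlag 4 2 d ≠ ⊥) :
    ∃ n, fourLinesQuad a b c d n = 0 ∧ H = transversal a b c d n := by
  have hca : c - a ≠ 0 := sub_ne_zero.2 hac.symm
  have hcb : c - b ≠ 0 := sub_ne_zero.2 hbc.symm
  have hda : d - a ≠ 0 := sub_ne_zero.2 had.symm
  have hdb : d - b ≠ 0 := sub_ne_zero.2 hbd.symm
  have hdc : d - c ≠ 0 := sub_ne_zero.2 hcd.symm
  have hba : b - a ≠ 0 := sub_ne_zero.2 hab.symm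
  rw [Submodule.ne_bot_iff] at ha hb hc hd
  obtain ⟨p, ⟨hpH, hpa⟩, hp0⟩ := ha
  obtain ⟨q, ⟨hqH, hqb⟩, hq0⟩ := hb
  obtain ⟨r, ⟨hrH, hrc⟩, hr0⟩ := hc
  obtain ⟨z, ⟨hzH, hzd⟩, hz0⟩ := hd
  have hspan := eq_span_pair_of_disjoint (oscFlag_disjoint hab) hH hp0 hq0 hpa hqb hpH hqH
  rw [SetLike.mem_coe, hspan, Submodule.mem_span_pair] at hrH hzH
  obtain ⟨x, y, rfl⟩ := hrH
  obtain ⟨x', y', rfl⟩ := hzH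
  obtain ⟨u, w, rfl⟩ := exists_eq_tangentVec hcd hpa
  obtain ⟨u', w', rfl⟩ := exists_eq_tangentVec hcd hqb
  -- a combination lying in a third tangent plane has two nonzero coefficients
  have hcoeff : ∀ {t x y : ℂ}, a ≠ t → b ≠ t →
      x • tangentVec c d a u w + y • tangentVec c d b u' w' ∈ oscFlag 4 2 t →
      x • tangentVec c d a u w + y • tangentVec c d b u' w' ≠ 0 → x ≠ 0 ∧ y ≠ 0 := by
    intro t x y hat hbt hmem hne
    constructor
    · rintro rfl
      rw [zero_smul, zero_add] at hmem hne
      exact hne (Submodule.disjoint_def.1 (oscFlag_disjoint hbt) _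
        (Submodule.smul_mem _ _ hqb) hmem)
    · rintro rfl
      rw [zero_smul, add_zero] at hmem hne
      exact hne (Submodule.disjoint_def.1 (oscFlag_disjoint hat) _
        (Submodule.smul_mem _ _ hpa) hmem)
  obtain ⟨hx, hy⟩ := hcoeff hac hbc hrc hr0
  obtain ⟨hx', hy'⟩ := hcoeff had hbd hzd hz0
  rw [SetLike.mem_coe, smul_tangentVec, smul_tangentVec, add_tangentVec_mem_left hcd] at hrc
  rw [SetLike.mem_coe, smul_tangentVec, smul_tangentVec, add_tangentVec_mem_right hcd] at hzd
  obtain ⟨hc1, hc2⟩ := hrc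
  obtain ⟨hd1, hd2⟩ := hzd
  have h3 : (c - b) * ((c - a) ^ 2 * (x * w) + (c - b) ^ 2 * (y * w')) =
      2 * ((d - c) * (b - a)) * (c - a) * (x * u) := by
    linear_combination (c - b) * hc2 - (2 * (d - c) - (c - b)) * hc1
  have h4 : (d - b) * ((d - a) ^ 2 * (x' * u) + (d - b) ^ 2 * (y' * u')) =
      -(2 * ((d - c) * (b - a)) * (d - a) * (x' * w)) := by
    linear_combination (2 * (d - c) + (d - b)) * hd1 - (d - b) * hd2
  have hu : u ≠ 0 := by
    rintro rfl
    have hu' : u' = 0 := by simpa [hcb, hy] using hc1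
    have hw : w = 0 := by simpa [hu', hdc, hba, hda, hx'] using h4
    exact hp0 (by rw [hw, tangentVec_zero])
  have hu' : u' ≠ 0 := by
    rintro rfl
    simp [hca, hx, hu] at hc1
  obtain ⟨n, hn⟩ : ∃ n, n * ((d - b) * u) = w * (c - b) :=
    ⟨w * (c - b) / ((d - b) * u), by field_simp⟩
  obtain ⟨hquad, hratio⟩ := elimination hca hcb hda hdb (mul_ne_zero hdc hba) hx hy hx' hy' hu
    hc1 hd1 h3 h4 hn
  refine ⟨n, hquad, eq_span_pair_of_disjoint (oscFlag_disjoint hab) hH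
    (tangentVec_ne_zero hcd (.inl hcb)) (tangentVec_ne_zero hcd (.inr hda))
    (tangentVec_mem _ _ _ _ _) (tangentVec_mem _ _ _ _ _) ?_ ?_⟩
  · convert H.smul_mem ((c - b) / u) hpH using 1
    rw [smul_tangentVec]
    congr 1 <;> field_simp
    linear_combination hn
  · convert H.smul_mem (n * (c - a) / u') hqH using 1
    rw [smul_tangentVec]
    congr 1 <;> field_simp
    linear_combination -hratio

theorem transversal_injective {a b c d : ℂ} (hab : a ≠ b) (hbc : b ≠ c) (hbd : b ≠ d)
    (hcd : c ≠ d) : Function.Injective (transversal a b c d) := by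
  intro n n' h
  have hcb : c - b ≠ 0 := sub_ne_zero.2 hbc.symm
  have hdb : d - b ≠ 0 := sub_ne_zero.2 hbd.symm
  have hmem : tangentVec c d a (c - b) (n * (d - b)) ∈ transversal a b c d n' :=
    h ▸ Submodule.subset_span (by simp)
  obtain ⟨x, y, hxy⟩ := Submodule.mem_span_pair.1 hmem
  have hy : y • tangentVec c d b (n' * (c - a)) (d - a) = 0 := by
    refine Submodule.disjoint_def.1 (oscFlag_disjoint hab) _ ?_
      (Submodule.smul_mem _ _ (tangentVec_mem _ _ _ _ _))
    rw [eq_sub_of_add_eq' hxy]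
    exact sub_mem (tangentVec_mem _ _ _ _ _) (Submodule.smul_mem _ _ (tangentVec_mem _ _ _ _ _))
  rw [hy, add_zero, smul_tangentVec] at hxy
  obtain ⟨h1, h2⟩ := tangentVec_injective hcd hxy
  obtain rfl : x = 1 := by simpa [hcb] using h1
  simpa [hdb] using h2.symm

theorem isRealSubspace_span_pair {n : ℕ} {p q : Fin n → ℂ}
    (hp : ∀ j, (starRingEnd ℂ) (p j) = p j) (hq : ∀ j, (starRingEnd ℂ) (q j) = q j) :
    IsRealSubspace (Submodule.span ℂ {p, q}) := by
  intro v hv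
  obtain ⟨x, y, rfl⟩ := Submodule.mem_span_pair.1 hv
  refine Submodule.mem_span_pair.2 ⟨(starRingEnd ℂ) x, (starRingEnd ℂ) y, ?_⟩
  ext j
  simp [hp, hq]

theorem conj_tangentVec (c d t u w : ℝ) (j : Fin 4) :
    (starRingEnd ℂ) (tangentVec c d t u w j) = tangentVec c d t u w j := by
  fin_cases j <;> simp [tangentVec, Complex.conj_ofNat]

theorem isRealSubspace_transversal (a b c d n : ℝ) : IsRealSubspace (transversal a b c d n) := by
  apply isRealSubspace_span_pair
  · exact_mod_cast conj_tangentVec c d a (c - b) (n * (d - b))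
  · exact_mod_cast conj_tangentVec c d b (n * (c - a)) (d - a)

/-- For real parameters in increasing order the quadratic has two distinct real roots. -/
theorem exists_roots_fourLinesQuad {a b c d : ℝ} (hab : a < b) (hbc : b < c) (hcd : c < d) :
    ∃ n₁ n₂ : ℝ, n₁ ≠ n₂ ∧
      ∀ n : ℂ, fourLinesQuad (a : ℂ) b c d n = 0 ↔ n = n₁ ∨ n = n₂ := by
  have hA : 0 < (c - a) * (d - b) := mul_pos (by linarith) (by linarith)
  have hB : 0 < (c - b) * (d - a) := mul_pos (by linarith) (by linarith)
  set A := (c - a) * (d - b) with hAdef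
  set B := (c - b) * (d - a) with hBdef
  set g := (d - c) * (b - a) with hgdef
  have hD : 0 < g ^ 2 + A * B := by positivity
  set r := √(g ^ 2 + A * B) with hrdef
  have hr : 0 < r := Real.sqrt_pos.2 hD
  have hr2 : r ^ 2 = g ^ 2 + A * B := Real.sq_sqrt hD.le
  refine ⟨(g + r) / A, (g - r) / A, ?_, fun n => ?_⟩
  · intro h
    rw [div_left_inj' hA.ne'] at h
    linarith
  · have hAC : (A : ℂ) ≠ 0 := by exact_mod_cast hA.ne'
    have hr2C : (r : ℂ) ^ 2 = g ^ 2 + A * B := by exact_mod_cast hr2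
    have hfac : (A : ℂ) * fourLinesQuad (a : ℂ) b c d n =
        (A * n - (g + r)) * (A * n - (g - r)) := by
      have : fourLinesQuad (a : ℂ) b c d n = A * n ^ 2 - 2 * g * n - B := by
        simp [fourLinesQuad, hAdef, hBdef, hgdef]
      rw [this]
      linear_combination hr2C
    rw [← mul_eq_zero_iff_left hAC, hfac, mul_eq_zero, sub_eq_zero, sub_eq_zero]
    push_cast
    rw [eq_div_iff hAC, eq_div_iff hAC, mul_comm n]

/-- **The Shapiro conjecture for the problem of four lines.** For four distinct real
numbers `s₁ < s₂ < s₃ < s₄` and the tangent planes `ℓ_i = F₂(s_i)` to the rational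
normal curve in `ℂ⁴`, there are exactly two 2-dimensional subspaces `H` of `ℂ⁴`
meeting every `ℓ_i` nontrivially, and both of them are real. -/
theorem four_lines (s : Fin 4 → ℝ)
    (hs : s 0 < s 1 ∧ s 1 < s 2 ∧ s 2 < s 3) :
    ({H : Submodule ℂ (Fin 4 → ℂ) |
        Module.finrank ℂ H = 2 ∧
        ∀ i : Fin 4, H ⊓ oscFlag 4 2 ((s i : ℂ)) ≠ ⊥}).ncard = 2 ∧
    ∀ H ∈ {H : Submodule ℂ (Fin 4 → ℂ) |
        Module.finrank ℂ H = 2 ∧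
        ∀ i : Fin 4, H ⊓ oscFlag 4 2 ((s i : ℂ)) ≠ ⊥},
      IsRealSubspace H := by
  obtain ⟨h01, h12, h23⟩ := hs
  obtain ⟨n₁, n₂, hne, hroots⟩ := exists_roots_fourLinesQuad h01 h12 h23
  have ne_of {i j : Fin 4} (h : s i < s j) : (s i : ℂ) ≠ s j := by exact_mod_cast h.ne
  have hab := ne_of h01
  have hac := ne_of (h01.trans h12)
  have had := ne_of (h01.trans (h12.trans h23))
  have hbc := ne_of h12
  have hbd := ne_of (h12.trans h23)
  have hcd := ne_of h23
  have hset : {H : Submodule ℂ (Fin 4 → ℂ) | Module.finrank ℂ H = 2 ∧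
      ∀ i : Fin 4, H ⊓ oscFlag 4 2 ((s i : ℂ)) ≠ ⊥} =
      {transversal (s 0) (s 1) (s 2) (s 3) n₁, transversal (s 0) (s 1) (s 2) (s 3) n₂} := by
    ext H
    simp only [Set.mem_ofPred_eq, Set.mem_insert_iff, Set.mem_singleton_iff]
    constructor
    · rintro ⟨hH, hmeet⟩
      obtain ⟨n, hn, rfl⟩ := exists_eq_transversal hab hac had hbc hbd hcd hH
        (hmeet 0) (hmeet 1) (hmeet 2) (hmeet 3)
      obtain rfl | rfl := (hroots n).1 hn <;> simp
    · intro hH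
      obtain ⟨n, hn, rfl⟩ : ∃ n, fourLinesQuad (s 0 : ℂ) (s 1) (s 2) (s 3) n = 0 ∧
          H = transversal (s 0) (s 1) (s 2) (s 3) n := by
        obtain rfl | rfl := hH
        · exact ⟨n₁, (hroots n₁).2 (.inl rfl), rfl⟩
        · exact ⟨n₂, (hroots n₂).2 (.inr rfl), rfl⟩
      obtain ⟨h0, h1, h2, h3⟩ := transversal_inf_oscFlag_ne_bot hab hac had hbc hbd hcd hn
      refine ⟨finrank_transversal hab had hbc hcd n, fun i => ?_⟩
      fin_cases i <;> assumption
  rw [hset]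
  refine ⟨Set.ncard_pair fun h => hne ?_, ?_⟩
  · exact_mod_cast transversal_injective hab hbc hbd hcd h
  · rintro H (rfl | rfl) <;> exact isRealSubspace_transversal _ _ _ _ _
end
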